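/- arXiv:1607.07205 — 10 statements merged into one kernel-verified Lean document; each statement's English description precedes it below -/
import Mathlib

section
/- Let K be a field, n ≥ 1, and X ∈ sl_n(K) a trace-zero matrix. Then X is sl_n(K)-regular if and only if X is gl_n(K)-regular and the trace map is nonzero on the unital K-subalgebra K[X] generated by X, i.e. there exists a polynomial p ∈ K[T] with tr(p(X)) ≠ 0. -/
open Matrix

/-- The centralizer of a matrix `X` inside all `n × n` matrices, as a submodule. -/
def glCent {R : Type*} [CommRing R] {n : ℕ} (X : Matrix (Fin n) (Fin n) R) :
    Submodule R (Matrix (Fin n) (Fin n) R) where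
  carrier := {Y | X * Y = Y * X}
  add_mem' := fun {a b} ha hb => by
    simp only [Set.mem_setOf_eq] at *
    rw [Matrix.mul_add, Matrix.add_mul, ha, hb]
  zero_mem' := by simp
  smul_mem' := fun c a ha => by
    simp only [Set.mem_setOf_eq] at *
    rw [Matrix.mul_smul, Matrix.smul_mul, ha]

/-- The centralizer of a matrix `X` inside the trace-zero `n × n` matrices, as a submodule. -/
def slCent {R : Type*} [CommRing R] {n : ℕ} (X : Matrix (Fin n) (Fin n) R) :
    Submodule R (Matrix (Fin n) (Fin n) R) where
  carrier := {Y | Y.trace = 0 ∧ X * Y = Y * X}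
  add_mem' := fun {a b} ha hb =>
    ⟨by rw [trace_add, ha.1, hb.1, add_zero],
     by rw [Matrix.mul_add, Matrix.add_mul, ha.2, hb.2]⟩
  zero_mem' := ⟨by simp, by simp⟩
  smul_mem' := fun c a ha =>
    ⟨by rw [trace_smul, ha.1, smul_zero],
     by rw [Matrix.mul_smul, Matrix.smul_mul, ha.2]⟩

section QuotientProduct

variable {R : Type*} [CommRing R] {ι : Type*} [DecidableEq ι] {I : ι → Ideal R}

/-- If every `R`-linear endomorphism of `Π i, R ⧸ I i` is a multiplication map, then there are no
containments between distinct proper ideals of the family. -/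
theorem Ideal.eq_top_of_le_of_lmul_surjective
    (h : Function.Surjective (Algebra.lmul R (∀ i, R ⧸ I i))) {i j : ι} (hij : i ≠ j)
    (hle : I j ≤ I i) : I i = ⊤ := by
  obtain ⟨b, hb⟩ := h (LinearMap.single R (fun i ↦ R ⧸ I i) i ∘ₗ
    (Ideal.Quotient.factorₐ R hle).toLinearMap ∘ₗ LinearMap.proj j)
  have := congrFun (LinearMap.congr_fun hb (Pi.single j 1)) i
  simp [hij] at this
  rw [Ideal.eq_top_iff_one, ← Ideal.Quotient.eq_zero_iff_mem]
  simpa using this.symm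

end QuotientProduct

/-- Two prime powers are coprime if either divides the other only when it is a unit. -/
theorem Irreducible.isCoprime_pow_of_dvd_imp_isUnit {R : Type*} [CommRing R] [IsDomain R]
    [IsPrincipalIdealRing R] {p q : R} (hp : Irreducible p) (hq : Irreducible q) {a b : ℕ}
    (hpq : p ^ a ∣ q ^ b → IsUnit (p ^ a)) (hqp : q ^ b ∣ p ^ a → IsUnit (q ^ b)) :
    IsCoprime (p ^ a) (q ^ b) := by
  by_cases h : p ∣ q
  · have hassoc : Associated p q := hp.associated_of_dvd hq h
    rcases le_total a b with hab | hba
    · have := hpq ((hassoc.pow_pow (n := a)).dvd.trans (pow_dvd_pow q hab))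
      exact IsCoprime.of_isCoprime_of_dvd_left isCoprime_one_left this.dvd
    · have := hqp ((hassoc.symm.pow_pow (n := b)).dvd.trans (pow_dvd_pow p hba))
      exact IsCoprime.of_isCoprime_of_dvd_right isCoprime_one_right this.dvd
  · exact (hp.coprime_iff_not_dvd.mpr h).pow

/-- A finitely generated torsion module `M` over a principal ideal domain `R` over a field `K`
satisfies `dim M ≤ dim End_R(M)`, with equality only if all endomorphisms are homotheties. -/
theorem Module.IsTorsion.finrank_le_finrank_end {K R M : Type*} [Field K] [CommRing R] [IsDomain R]
    [IsPrincipalIdealRing R] [Algebra K R] [AddCommGroup M] [Module R M] [Module K M]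
    [IsScalarTower K R M] [Module.Finite R M] [Module.Finite K (Module.End R M)]
    (hM : Module.IsTorsion R M) :
    Module.finrank K M ≤ Module.finrank K (Module.End R M) ∧
      (Module.finrank K (Module.End R M) = Module.finrank K M →
        ∀ f : Module.End R M, ∃ r : R, ∀ m, f m = r • m) := by
  classical
  obtain ⟨ι, _, p, hp, e, ⟨E⟩⟩ := Module.equiv_directSum_of_isTorsion hM
  let I : ι → Ideal R := fun i ↦ Ideal.span {p i ^ e i}
  let F : M ≃ₗ[R] ∀ i, R ⧸ I i :=
    E.trans (DirectSum.linearEquivFunOnFintype R ι (fun i ↦ R ⧸ I i))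
  let L : (∀ i, R ⧸ I i) →ₗ[K] Module.End R (∀ i, R ⧸ I i) :=
    (Algebra.lmul R (∀ i, R ⧸ I i)).toLinearMap.restrictScalars K
  have hL : Function.Injective L := Algebra.lmul_injective
  let c : Module.End R M ≃ₗ[K] Module.End R (∀ i, R ⧸ I i) := (F.conjAlgEquiv K).toLinearEquiv
  have : Module.Finite K (Module.End R (∀ i, R ⧸ I i)) := Module.Finite.equiv c
  have : Module.Finite K (∀ i, R ⧸ I i) := Module.Finite.of_injective L hL
  have hF := (F.restrictScalars K).finrank_eq
  rw [hF, c.finrank_eq]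
  refine ⟨LinearMap.finrank_le_finrank_of_injective hL, fun heq f ↦ ?_⟩
  have hsurj : Function.Surjective (Algebra.lmul R (∀ i, R ⧸ I i)) :=
    (LinearMap.injective_iff_surjective_of_finrank_eq_finrank heq.symm).mp hL
  have hunit {i j : ι} (hij : i ≠ j) (hdvd : p i ^ e i ∣ p j ^ e j) : IsUnit (p i ^ e i) :=
    Ideal.span_singleton_eq_top.mp (Ideal.eq_top_of_le_of_lmul_surjective hsurj hij
      (Ideal.span_singleton_le_span_singleton.mpr hdvd))
  have hcop : Pairwise (Function.onFun IsCoprime I) := fun i j hij ↦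
    (Ideal.isCoprime_span_singleton_iff _ _).mpr
      ((hp i).isCoprime_pow_of_dvd_imp_isUnit (hp j) (hunit hij) (hunit hij.symm))
  obtain ⟨b, hb⟩ := hsurj (c f)
  obtain ⟨r, hr⟩ := Ideal.pi_quotient_surjective hcop b
  refine ⟨r, fun m ↦ F.injective ?_⟩
  have hbm : b * F m = F (f m) := by
    simpa [c] using LinearMap.congr_fun hb (F m)
  rw [← hbm, map_smul, Algebra.smul_def]
  congr 1
  exact (funext hr).symm

section Centralizer

open Polynomial

variable {K : Type*} [Field K] {n : ℕ} (X : Matrix (Fin n) (Fin n) K)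

/-- Matrices commuting with `X` are the endomorphisms of the `K[T]`-module defined by `X`. -/
noncomputable def glCentEquivEnd :
    glCent X ≃ₗ[K] Module.End K[X] (Module.AEval' (Matrix.toLin' X)) where
  toFun Y := LinearMap.ofAEval _
      ((Module.AEval'.of (Matrix.toLin' X)).toLinearMap ∘ₗ Matrix.toLin' Y.1) fun m ↦ by
    have h : X * Y.1 = Y.1 * X := Y.2
    simp [Module.AEval'.X_smul_of, h]
  map_add' Y Z := by
    ext m
    simp [LinearMap.ofAEval]
  map_smul' c Y := by
    ext m
    simp [LinearMap.ofAEval]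
  invFun f := ⟨LinearMap.toMatrix' ((Module.AEval'.of (Matrix.toLin' X)).symm.toLinearMap ∘ₗ
      f.restrictScalars K ∘ₗ (Module.AEval'.of (Matrix.toLin' X)).toLinearMap), by
    change X * _ = _ * X
    refine Matrix.toLin'.injective (LinearMap.ext fun m ↦ ?_)
    have h := f.map_smul (Polynomial.X : K[X]) (Module.AEval'.of (Matrix.toLin' X) m)
    rw [Module.AEval'.X_smul_of] at h
    have h' := congrArg (Module.AEval'.of (Matrix.toLin' X)).symm h
    rw [Module.AEval'.of_symm_X_smul] at h'
    rw [Matrix.toLin'_mul, Matrix.toLin'_mul, Matrix.toLin'_toMatrix']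
    exact h'.symm⟩
  left_inv Y := Subtype.ext (LinearMap.toMatrix'_toLin' Y.1)
  right_inv f := by
    ext m
    simp only [Matrix.toLin'_toMatrix']
    rfl

/-- The centralizer of `X` has dimension at least `n`, with equality only if it is `K[X]`. -/
theorem le_finrank_glCent_and_exists_aeval_eq :
    n ≤ Module.finrank K (glCent X) ∧
      (Module.finrank K (glCent X) = n → ∀ Y ∈ glCent X, ∃ p : K[X], aeval X p = Y) := by
  have : Module.Finite K (Module.End K[X] (Module.AEval' (Matrix.toLin' X))) :=
    Module.Finite.equiv (glCentEquivEnd X)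
  have hn : Module.finrank K (Module.AEval' (Matrix.toLin' X)) = n := by
    rw [← (Module.AEval'.of (Matrix.toLin' X)).finrank_eq, Module.finrank_fin_fun]
  have h := (Module.AEval.isTorsion_of_finiteDimensional K (Fin n → K)
    (Matrix.toLin' X)).finrank_le_finrank_end (K := K)
  rw [hn, ← (glCentEquivEnd X).finrank_eq] at h
  refine ⟨h.1, fun heq Y hY ↦ ?_⟩
  obtain ⟨p, hp⟩ := h.2 heq (glCentEquivEnd X ⟨Y, hY⟩)
  refine ⟨p, Matrix.toLin'.injective (LinearMap.ext fun m ↦ ?_)⟩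
  have hYm : Matrix.toLin' Y m = aeval (Matrix.toLin' X) p m := hp (Module.AEval'.of _ m)
  rw [hYm]
  exact LinearMap.congr_fun (aeval_algHom_apply (Matrix.toLinAlgEquiv' (R := K)) X p).symm m

theorem aeval_mem_glCent (p : K[X]) : aeval X p ∈ glCent X :=
  by
  change X * aeval X p = aeval X p * X
  simpa using congrArg (aeval X) (mul_comm (Polynomial.X : K[X]) p)

/-- The trace as a linear form on the centralizer of `X`. -/
def glCentTrace : glCent X →ₗ[K] K :=
  Matrix.traceLinearMap (Fin n) K K ∘ₗ (glCent X).subtype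

theorem finrank_range_glCentTrace_add :
    Module.finrank K (LinearMap.range (glCentTrace X)) + Module.finrank K (slCent X) =
      Module.finrank K (glCent X) := by
  rw [← LinearMap.finrank_range_add_finrank_ker (glCentTrace X)]
  congr 1
  have hle : slCent X ≤ glCent X := fun _ hY ↦ hY.2
  rw [← (Submodule.comapSubtypeEquivOfLe hle).finrank_eq]
  have hker : (glCentTrace X).ker = (slCent X).comap (glCent X).subtype := by
    ext Y
    exact ⟨fun h ↦ ⟨h, Y.2⟩, fun h ↦ h.1⟩
  rw [hker]

end Centralizer

/-- A trace-zero matrix `X` is `sl_n(K)`-regular if and only if it is `gl_n(K)`-regular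
and the trace map is nonzero on the unital subalgebra `K[X]`. -/
theorem slRegular_iff_glRegular_and_trace_ne_zero {K : Type*} [Field K] {n : ℕ} (hn : 1 ≤ n)
    (X : Matrix (Fin n) (Fin n) K) (hX : X.trace = 0) :
    Module.finrank K (slCent X) = n - 1 ↔
      Module.finrank K (glCent X) = n ∧
        ∃ p : Polynomial K, (Polynomial.aeval X p).trace ≠ 0 := by
  have hadd := finrank_range_glCentTrace_add X
  obtain ⟨hle, hpoly⟩ := le_finrank_glCent_and_exists_aeval_eq X
  have hrange : Module.finrank K (LinearMap.range (glCentTrace X)) ≤ 1 :=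
    (Submodule.finrank_le _).trans (Module.finrank_self K).le
  constructor
  · intro h
    have hgl : Module.finrank K (glCent X) = n := by omega
    refine ⟨hgl, ?_⟩
    by_contra! hzero
    have htrace : glCentTrace X = 0 := by
      ext ⟨Y, hY⟩
      obtain ⟨p, rfl⟩ := hpoly hgl Y hY
      exact hzero p
    rw [htrace, LinearMap.range_zero, finrank_bot] at hadd
    omega
  · rintro ⟨hgl, p, hp⟩
    have hsurj : Function.Surjective (glCentTrace X) :=
      LinearMap.surjective fun h ↦ hp (LinearMap.congr_fun h ⟨_, aeval_mem_glCent X p⟩)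
    rw [LinearMap.range_eq_top.mpr hsurj, finrank_top, Module.finrank_self] at hadd
    omega
end

section
/- Let R be a local principal ideal domain with maximal ideal p, let A ∈ sl_n(R) be a trace-zero matrix, and let X ∈ sl_n(R) be a trace-zero matrix such that the reduction X mod p is sl_n(R/p)-regular. Then there exists a trace-zero matrix Y ∈ sl_n(R) with XY − YX = A if and only if tr(X^r · A) = 0 for r = 1, …, n−1. -/
open Matrix

open Polynomial

/-- Over a PID, two cyclic modules whose annihilators are not coprime, the second one being
nonzero, admit a nonzero homomorphism between them. -/
theorem exists_linearMap_quotient_ne_zero {A : Type*} [CommRing A] [IsDomain A]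
    [IsPrincipalIdealRing A] {a b : A} (hb : b ≠ 0) (hab : ¬ IsCoprime a b) :
    ∃ φ : (A ⧸ Ideal.span {a}) →ₗ[A] (A ⧸ Ideal.span {b}), φ ≠ 0 := by
  obtain ⟨d, hda, hdb, hd⟩ : ∃ d, d ∣ a ∧ d ∣ b ∧ ¬ IsUnit d := by
    by_contra! h
    exact hab (IsRelPrime.isCoprime fun d h₁ h₂ => h d h₁ h₂)
  obtain ⟨a', rfl⟩ := hda
  obtain ⟨b', rfl⟩ := hdb
  let g : A →ₗ[A] (A ⧸ Ideal.span {d * b'}) :=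
    LinearMap.toSpanSingleton A _ (Ideal.Quotient.mk _ b')
  have hg : Ideal.span {d * a'} ≤ LinearMap.ker g := by
    rw [Ideal.span_singleton_le_iff_mem, LinearMap.mem_ker]
    change Ideal.Quotient.mk (Ideal.span {d * b'}) (d * a' * b') = 0
    rw [Ideal.Quotient.eq_zero_iff_mem, Ideal.mem_span_singleton]
    exact ⟨a', by ring⟩
  refine ⟨Submodule.liftQ _ g hg, fun h => hd ?_⟩
  have h1 : g 1 = 0 := by
    exact LinearMap.congr_fun h (Submodule.Quotient.mk 1)
  have h2 : Ideal.Quotient.mk (Ideal.span {d * b'}) b' = 0 := by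
    simpa [g] using h1
  rw [Ideal.Quotient.eq_zero_iff_mem, Ideal.mem_span_singleton] at h2
  obtain ⟨c, hc⟩ := h2
  have hb' : b' ≠ 0 := right_ne_zero_of_mul hb
  refine IsUnit.of_mul_eq_one c (mul_left_cancel₀ hb' ?_)
  linear_combination -hc

/-- A nonzero homomorphism between two distinct factors makes the endomorphism algebra of a product
of cyclic modules strictly larger than the product itself. -/
theorem finrank_lt_finrank_end_pi_quotient {K A ι : Type*} [Field K] [CommRing A] [Algebra K A]
    [Fintype ι] [DecidableEq ι] (I : ι → Ideal A) [FiniteDimensional K (∀ i, A ⧸ I i)]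
    [FiniteDimensional K (Module.End A (∀ i, A ⧸ I i))]
    {i j : ι} (hij : i ≠ j) (φ : (A ⧸ I i) →ₗ[A] (A ⧸ I j)) (hφ : φ ≠ 0) :
    Module.finrank K (∀ i, A ⧸ I i) < Module.finrank K (Module.End A (∀ i, A ⧸ I i)) := by
  let ψ : Module.End A (∀ i, A ⧸ I i) :=
    LinearMap.single A (fun i => A ⧸ I i) j ∘ₗ φ ∘ₗ LinearMap.proj i
  let L : ((∀ i, A ⧸ I i) × K) →ₗ[K] Module.End A (∀ i, A ⧸ I i) :=
    { toFun := fun x => LinearMap.mulLeft A x.1 + x.2 • ψ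
      map_add' := fun x y => by
        ext z
        simp [add_mul, add_smul]
        ring
      map_smul' := fun c x => by
        ext z
        simp [mul_smul] }
  have hL : Function.Injective L := by
    rw [← LinearMap.ker_eq_bot, LinearMap.ker_eq_bot']
    rintro ⟨m, c⟩ h
    have hm : m = 0 := by
      funext k
      have hk := congrFun (LinearMap.congr_fun h (Pi.single k 1)) k
      have hψ : ψ (Pi.single k 1) k = 0 := by
        by_cases hki : k = i
        · subst hki
          simp [ψ, hij]
        · simp [ψ, Pi.single_eq_of_ne (Ne.symm hki)]
      simpa [L, hψ] using hk
    subst hm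
    have hψ : ψ ≠ 0 := fun h0 => hφ <| by
      refine LinearMap.ext fun x => ?_
      simpa [ψ] using congrFun (LinearMap.congr_fun h0 (Pi.single i x)) j
    have hc : c • ψ = 0 := by
      simpa [L] using h
    simpa [hψ] using hc
  have := LinearMap.finrank_le_finrank_of_injective hL
  rw [Module.finrank_prod, Module.finrank_self] at this
  omega

section Field

variable {K : Type*} [Field K] {n : ℕ}

/-- Endomorphisms of the `K[X]`-module attached to a matrix give matrices commuting with it. -/
theorem exists_injective_end_aeval_glCent (Z : Matrix (Fin n) (Fin n) K) :
    ∃ L : Module.End K[X] (Module.AEval' (Matrix.toLin' Z)) →ₗ[K] glCent Z,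
      Function.Injective L := by
  let o := Module.AEval'.of (Matrix.toLin' Z)
  let L₀ : Module.End K[X] (Module.AEval' (Matrix.toLin' Z)) →ₗ[K]
      Matrix (Fin n) (Fin n) K :=
    { toFun := fun T => LinearMap.toMatrix' (o.symm.toLinearMap ∘ₗ T.restrictScalars K ∘ₗ
        o.toLinearMap)
      map_add' := fun S T => by
        rw [← map_add]
        congr 1
      map_smul' := fun c T => by
        rw [RingHom.id_apply, ← map_smul]
        congr 1 }
  have hL₀ : ∀ T, L₀ T ∈ glCent Z := fun T => by
    change Z * L₀ T = L₀ T * Z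
    apply Matrix.toLin'.injective
    rw [Matrix.toLin'_mul, Matrix.toLin'_mul]
    refine LinearMap.ext fun v => ?_
    simp only [L₀, LinearMap.coe_mk, AddHom.coe_mk, Matrix.toLin'_toMatrix', LinearMap.comp_apply,
      LinearEquiv.coe_coe, LinearMap.coe_restrictScalars]
    rw [← Module.AEval'.X_smul_of, map_smul]
    exact (Module.AEval'.of_symm_X_smul _ _).symm
  refine ⟨L₀.codRestrict _ hL₀, fun S T h => LinearMap.ext fun v => ?_⟩
  have h' : L₀ S = L₀ T := congrArg Subtype.val h
  have h'' := LinearMap.congr_fun ((LinearMap.toMatrix' (R := K)).injective (show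
    LinearMap.toMatrix' (o.symm.toLinearMap ∘ₗ S.restrictScalars K ∘ₗ o.toLinearMap) =
      LinearMap.toMatrix' (o.symm.toLinearMap ∘ₗ T.restrictScalars K ∘ₗ o.toLinearMap) from h'))
    (o.symm v)
  simpa using h''

/-- A matrix whose centralizer has dimension at most `n` is nonderogatory. -/
theorem le_natDegree_minpoly_of_finrank_glCent_le (Z : Matrix (Fin n) (Fin n) K)
    (h : Module.finrank K (glCent Z) ≤ n) : n ≤ (minpoly K Z).natDegree := by
  classical
  let M := Module.AEval' (Matrix.toLin' Z)
  have hM : Module.finrank K M = n := by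
    rw [← (Module.AEval'.of (Matrix.toLin' Z)).finrank_eq]
    simp
  have htors : Module.IsTorsion K[X] M :=
    Module.AEval.isTorsion_of_finiteDimensional K (Fin n → K) (Matrix.toLin' Z)
  obtain ⟨ι, _, p, hp, e, ⟨E₀⟩⟩ := Module.equiv_directSum_of_isTorsion htors
  let I : ι → Ideal K[X] := fun i => Ideal.span {p i ^ e i}
  let E : M ≃ₗ[K[X]] ∀ i, K[X] ⧸ I i :=
    E₀.trans (DirectSum.linearEquivFunOnFintype K[X] ι fun i => K[X] ⧸ I i)
  let EK : M ≃ₗ[K] ∀ i, K[X] ⧸ I i := E.restrictScalars K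
  have : FiniteDimensional K (∀ i, K[X] ⧸ I i) := EK.finiteDimensional
  obtain ⟨L, hL⟩ := exists_injective_end_aeval_glCent Z
  have : FiniteDimensional K (Module.End K[X] M) := FiniteDimensional.of_injective L hL
  let C : Module.End K[X] M ≃ₗ[K] Module.End K[X] (∀ i, K[X] ⧸ I i) :=
    { E.conj with
      map_smul' := fun c T => by
        refine LinearMap.ext fun v => ?_
        exact EK.map_smul c _ }
  have : FiniteDimensional K (Module.End K[X] (∀ i, K[X] ⧸ I i)) := Module.Finite.equiv C
  have hcop : Pairwise (Function.onFun IsCoprime I) := by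
    intro i j hij
    by_contra hc
    have hc' : ¬ IsCoprime (p i ^ e i) (p j ^ e j) := fun h' =>
      hc ((Ideal.isCoprime_span_singleton_iff _ _).2 h')
    obtain ⟨φ, hφ⟩ := exists_linearMap_quotient_ne_zero (pow_ne_zero _ (hp j).ne_zero) hc'
    have h1 := finrank_lt_finrank_end_pi_quotient (K := K) I hij φ hφ
    have h2 := LinearMap.finrank_le_finrank_of_injective hL
    rw [← EK.finrank_eq, ← C.finrank_eq, hM] at h1
    change Module.finrank K (Module.End K[X] M) ≤ _ at h2
    omega
  let g : K[X] →ₗ[K[X]] M := LinearMap.toSpanSingleton K[X] M (E.symm 1)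
  have hg : Function.Surjective g := fun m => by
    obtain ⟨r, hr⟩ := Ideal.pi_quotient_surjective hcop (E m)
    refine ⟨r, E.injective ?_⟩
    simp only [g, LinearMap.toSpanSingleton_apply, map_smul, LinearEquiv.apply_symm_apply]
    funext i
    rw [← hr i, Pi.smul_apply, Pi.one_apply]
    exact congrArg (Ideal.Quotient.mk (I i)) (mul_one r)
  have hker : Ideal.span {minpoly K Z} ≤ LinearMap.ker g := by
    rw [Ideal.span_singleton_le_iff_mem, LinearMap.mem_ker]
    simp only [g, LinearMap.toSpanSingleton_apply]
    rw [← Matrix.minpoly_toLin']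
    apply (Module.AEval.of K (Fin n → K) (Matrix.toLin' Z)).symm.injective
    rw [Module.AEval.of_symm_smul, minpoly.aeval, zero_smul, map_zero]
  let q : (K[X] ⧸ Ideal.span {minpoly K Z}) →ₗ[K] M :=
    (Submodule.liftQ _ g hker).restrictScalars K
  have hq : Function.Surjective q := fun m => by
    obtain ⟨r, rfl⟩ := hg m
    exact ⟨Submodule.Quotient.mk r, rfl⟩
  have hmonic := minpoly.monic (Algebra.IsIntegral.isIntegral (R := K) Z)
  have : FiniteDimensional K (K[X] ⧸ Ideal.span {minpoly K Z}) :=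
    hmonic.finite_quotient
  have := LinearMap.finrank_le_finrank_of_surjective hq
  rwa [hM, finrank_quotient_span_eq_natDegree] at this

/-- The powers `1, Z, …, Z ^ (n - 1)` of a matrix with centralizer of dimension at most `n` are
linearly independent. -/
theorem linearIndependent_pow_of_finrank_glCent_le (Z : Matrix (Fin n) (Fin n) K)
    (h : Module.finrank K (glCent Z) ≤ n) :
    LinearIndependent K fun i : Fin n => Z ^ (i : ℕ) :=
  (linearIndependent_pow Z).comp (Fin.castLE (le_natDegree_minpoly_of_finrank_glCent_le Z h))
    (Fin.castLE_injective _)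

theorem finrank_glCent_le_finrank_slCent_add_one (Z : Matrix (Fin n) (Fin n) K) :
    Module.finrank K (glCent Z) ≤ Module.finrank K (slCent Z) + 1 := by
  let t := Matrix.traceLinearMap (Fin n) K K
  have hinf : glCent Z ⊓ LinearMap.ker t = slCent Z := by
    ext Y
    exact and_comm
  have h1 := Submodule.finrank_sup_add_finrank_inf_eq (glCent Z) (LinearMap.ker t)
  have h2 := t.finrank_range_add_finrank_ker
  have h3 := Submodule.finrank_le (LinearMap.range t)
  have h4 := Submodule.finrank_le (glCent Z ⊔ LinearMap.ker t)
  rw [Module.finrank_self] at h3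
  rw [hinf] at h1
  omega

end Field

/-- The commutator map `Y ↦ X * Y - Y * X`. -/
def commutatorMap {R : Type*} [CommRing R] {n : ℕ} (X : Matrix (Fin n) (Fin n) R) :
    Matrix (Fin n) (Fin n) R →ₗ[R] Matrix (Fin n) (Fin n) R :=
  LinearMap.mulLeft R X - LinearMap.mulRight R X

/-- The functionals `A ↦ tr (X ^ r * A)` for `r < n`. -/
def tracePowMap {R : Type*} [CommRing R] {n : ℕ} (X : Matrix (Fin n) (Fin n) R) :
    Matrix (Fin n) (Fin n) R →ₗ[R] (Fin n → R) :=
  LinearMap.pi fun r => Matrix.traceLinearMap (Fin n) R R ∘ₗ LinearMap.mulLeft R (X ^ (r : ℕ))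

section CommRing

variable {R : Type*} [CommRing R] {n : ℕ} (X : Matrix (Fin n) (Fin n) R)

@[simp]
theorem commutatorMap_apply (Y : Matrix (Fin n) (Fin n) R) :
    commutatorMap X Y = X * Y - Y * X := rfl

@[simp]
theorem tracePowMap_apply (A : Matrix (Fin n) (Fin n) R) (r : Fin n) :
    tracePowMap X A r = (X ^ (r : ℕ) * A).trace := rfl

theorem ker_commutatorMap : LinearMap.ker (commutatorMap X) = glCent X := by
  ext Y
  exact sub_eq_zero

theorem trace_pow_mul_commutator (Y : Matrix (Fin n) (Fin n) R) (r : ℕ) :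
    (X ^ r * (X * Y - Y * X)).trace = 0 := by
  rw [mul_sub, trace_sub, sub_eq_zero, ← mul_assoc, ← mul_assoc, Matrix.trace_mul_comm _ X,
    ← mul_assoc, ← pow_succ, ← pow_succ']

theorem range_commutatorMap_le :
    LinearMap.range (commutatorMap X) ≤ LinearMap.ker (tracePowMap X) := by
  rintro _ ⟨Y, rfl⟩
  exact funext fun r => trace_pow_mul_commutator X Y r

end CommRing

theorem tracePowMap_surjective {K : Type*} [Field K] {n : ℕ} (Z : Matrix (Fin n) (Fin n) K)
    (h : LinearIndependent K fun i : Fin n => Z ^ (i : ℕ)) :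
    Function.Surjective (tracePowMap Z) := by
  rw [← LinearMap.range_eq_top]
  by_contra hne
  obtain ⟨f, hf, hle⟩ := Submodule.exists_le_ker_of_lt_top _ (lt_top_iff_ne_top.2 hne)
  have hfv : ∀ v, f v = ∑ i, v i * f (Pi.single i 1) := fun v => by
    rw [f.pi_apply_eq_sum_univ v]
    refine Finset.sum_congr rfl fun i _ => ?_
    rw [smul_eq_mul]
    congr 2
    funext j
    simp [Pi.single_apply, eq_comm]
  have hsum : ∑ i : Fin n, f (Pi.single i 1) • Z ^ (i : ℕ) = 0 := by
    refine Matrix.ext_iff_trace_mul_right.2 fun B => ?_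
    have hB : f (tracePowMap Z B) = 0 := hle ⟨B, rfl⟩
    rw [hfv] at hB
    simpa [Finset.sum_mul, trace_sum, mul_comm] using hB
  have hz := Fintype.linearIndependent_iff.1 h _ hsum
  exact hf (LinearMap.ext fun v => by simp [hfv v, hz])

/-- Over a field, the image of the commutator map of a nonderogatory matrix is cut out by the
trace conditions. -/
theorem range_commutatorMap_eq {K : Type*} [Field K] {n : ℕ} (Z : Matrix (Fin n) (Fin n) K)
    (h : Module.finrank K (glCent Z) ≤ n) :
    LinearMap.range (commutatorMap Z) = LinearMap.ker (tracePowMap Z) := by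
  refine Submodule.eq_of_le_of_finrank_le (range_commutatorMap_le Z) ?_
  have h1 := (commutatorMap Z).finrank_range_add_finrank_ker
  have h2 := (tracePowMap Z).finrank_range_add_finrank_ker
  rw [LinearMap.range_eq_top.2
    (tracePowMap_surjective Z (linearIndependent_pow_of_finrank_glCent_le Z h)),
    finrank_top, Module.finrank_fin_fun] at h2
  rw [ker_commutatorMap] at h1
  omega

theorem exists_trace_pow_ne_zero {K : Type*} [Field K] {n : ℕ} (hn : 0 < n)
    (Z : Matrix (Fin n) (Fin n) K) (h : Module.finrank K (slCent Z) = n - 1) :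
    ∃ r : ℕ, (Z ^ r).trace ≠ 0 := by
  by_contra! hz
  have hli := linearIndependent_pow_of_finrank_glCent_le Z
    ((finrank_glCent_le_finrank_slCent_add_one Z).trans (by omega))
  have hmem : ∀ i : Fin n, Z ^ (i : ℕ) ∈ slCent Z := fun i =>
    ⟨hz i, ((Commute.refl Z).pow_right i).eq⟩
  have hli' : LinearIndependent K fun i : Fin n => (⟨Z ^ (i : ℕ), hmem i⟩ : slCent Z) :=
    LinearIndependent.of_comp (slCent Z).subtype hli
  have := hli'.fintype_card_le_finrank
  rw [Fintype.card_fin] at this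
  omega

section LocalRing

variable {R : Type*} [CommRing R] [IsDomain R] [IsPrincipalIdealRing R] [IsLocalRing R] {n : ℕ}

theorem range_commutatorMap_eq_of_residue (X : Matrix (Fin n) (Fin n) R)
    (h : Module.finrank (IsLocalRing.ResidueField R)
      (glCent (X.map (IsLocalRing.residue R))) ≤ n) :
    LinearMap.range (commutatorMap X) = LinearMap.ker (tracePowMap X) := by
  refine le_antisymm (range_commutatorMap_le X) ?_
  let ρ := IsLocalRing.residue R
  obtain ⟨π, hπ⟩ := (IsPrincipalIdealRing.principal (IsLocalRing.maximalIdeal R)).principal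
  have hπmem : ∀ x, ρ x = 0 → ∃ y, x = π * y := fun x hx => by
    rw [IsLocalRing.residue_eq_zero_iff, hπ] at hx
    exact Ideal.mem_span_singleton.1 hx
  refine Submodule.le_of_le_smul_of_le_jacobson_bot (I := IsLocalRing.maximalIdeal R)
    (IsNoetherian.noetherian _) (IsLocalRing.maximalIdeal_le_jacobson ⊥) fun W hW => ?_
  have hWr : ∀ r : Fin n, (X ^ (r : ℕ) * W).trace = 0 := fun r => congrFun hW r
  have hbar : W.map ρ ∈ LinearMap.range (commutatorMap (X.map ρ)) := by
    rw [range_commutatorMap_eq _ h]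
    refine funext fun r => ?_
    have hr := congrArg ρ (hWr r)
    rw [map_zero, AddMonoidHom.map_trace ρ, Matrix.map_mul, Matrix.map_pow] at hr
    exact hr
  obtain ⟨Yb, hYb⟩ := hbar
  choose s hs using IsLocalRing.residue_surjective (R := R)
  let Y : Matrix (Fin n) (Fin n) R := Yb.map s
  have hY : Y.map ρ = Yb := by
    ext i j
    exact hs _
  have hdiff : ∀ i j, ∃ y, (W - commutatorMap X Y) i j = π * y := fun i j => hπmem _ <| by
    have hmap : (W - commutatorMap X Y).map ρ = 0 := by
      rw [commutatorMap_apply, Matrix.map_sub ρ (map_sub ρ), Matrix.map_sub ρ (map_sub ρ),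
        Matrix.map_mul, Matrix.map_mul, hY, ← hYb, commutatorMap_apply, sub_self]
    exact congrFun (congrFun hmap i) j
  choose N hN using hdiff
  have hWN : W = commutatorMap X Y + π • (Matrix.of N) := by
    rw [← sub_eq_iff_eq_add']
    ext i j
    simp [hN i j, -commutatorMap_apply]
  rw [hWN]
  refine Submodule.add_mem_sup ⟨Y, rfl⟩ ?_
  by_cases hπ0 : π = 0
  · rw [hπ0, zero_smul]
    exact zero_mem _
  · refine Submodule.smul_mem_smul (hπ ▸ Submodule.mem_span_singleton_self π) ?_
    have h0 : tracePowMap X (π • Matrix.of N) = 0 := by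
      rw [← sub_eq_iff_eq_add'.2 hWN, map_sub, LinearMap.mem_ker.1 hW,
        LinearMap.mem_ker.1 (range_commutatorMap_le X ⟨Y, rfl⟩), sub_zero]
    rw [map_smul] at h0
    exact (smul_eq_zero.1 h0).resolve_left hπ0

end LocalRing

/-- Local Laffey–Reams criterion: over a local PID `R`, if `X mod p` is `sl_n(R/p)`-regular,
then `A = [X, Y]` for some trace-zero `Y` iff `tr(X^r A) = 0` for `r = 1, …, n-1`. -/
theorem commutator_criterion_local_PID {R : Type*} [CommRing R] [IsDomain R]
    [IsPrincipalIdealRing R] [IsLocalRing R] {n : ℕ}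
    (A : Matrix (Fin n) (Fin n) R) (hA : A.trace = 0)
    (X : Matrix (Fin n) (Fin n) R) (hX : X.trace = 0)
    (hreg : Module.finrank (IsLocalRing.ResidueField R)
      (slCent (X.map (IsLocalRing.residue R))) = n - 1) :
    (∃ Y : Matrix (Fin n) (Fin n) R, Y.trace = 0 ∧ X * Y - Y * X = A) ↔
      ∀ r : ℕ, 1 ≤ r → r ≤ n - 1 → (X ^ r * A).trace = 0 := by
  constructor
  · rintro ⟨Y, -, rfl⟩ r - -
    exact trace_pow_mul_commutator X Y r
  · intro h
    rcases Nat.eq_zero_or_pos n with rfl | hn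
    · exact ⟨0, by simp, Subsingleton.elim _ _⟩
    have hgl : Module.finrank (IsLocalRing.ResidueField R)
        (glCent (X.map (IsLocalRing.residue R))) ≤ n :=
      (finrank_glCent_le_finrank_slCent_add_one _).trans (by omega)
    have hAmem : A ∈ LinearMap.ker (tracePowMap X) := funext fun r => by
      rcases Nat.eq_zero_or_pos (r : ℕ) with hr | hr
      · simpa [hr] using hA
      · exact h r hr (by omega)
    rw [← range_commutatorMap_eq_of_residue X hgl] at hAmem
    obtain ⟨Y, hY⟩ := hAmem
    obtain ⟨r, hr⟩ := exists_trace_pow_ne_zero hn _ hreg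
    have hunit : IsUnit (X ^ r).trace := by
      rw [← Matrix.map_pow, ← AddMonoidHom.map_trace (IsLocalRing.residue R)] at hr
      exact IsLocalRing.residue_ne_zero_iff_isUnit _ |>.1 hr
    obtain ⟨u, hu⟩ := hunit
    refine ⟨Y - (Y.trace * ↑u⁻¹) • X ^ r, ?_, ?_⟩
    · rw [trace_sub, trace_smul, ← hu, smul_eq_mul, mul_assoc, Units.inv_mul, mul_one, sub_self]
    · rw [← hY, commutatorMap_apply, mul_sub, sub_mul, Matrix.mul_smul, Matrix.smul_mul,
        ← pow_succ, ← pow_succ', sub_sub_sub_cancel_right]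
end

section
/- Let S be a commutative ring with identity, n ≥ 3, x = (x_1, …, x_{n−1})ᵀ ∈ S^{n−1}, and a ∈ S. Let X(x,a) ∈ M_n(S) be the trace-zero matrix with entries m_{i,i+1} = 1 for i = 2, …, n−1, m_{i,1} = x_{i−1} for i = 2, …, n, m_{n,2} = a, and all other entries zero. Then tr(X(x,a)^r) = 0 for r = 1, …, n−2, and tr(X(x,a)^{n−1}) = (n−1)·a. -/
open Matrix

/-- A positive power of a square matrix with a zero row has the same zero row. -/
theorem pow_apply_eq_zero_of_row_eq_zero {ι S : Type*} [Fintype ι] [DecidableEq ι]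
    [CommRing S] {X : Matrix ι ι S} {i : ι} (h : ∀ j, X i j = 0) {r : ℕ} (hr : 1 ≤ r) (j : ι) :
    (X ^ r) i j = 0 := by
  obtain ⟨k, rfl⟩ := Nat.exists_eq_add_of_le' hr
  rw [pow_succ', Matrix.mul_apply]
  exact Finset.sum_eq_zero fun k _ => by rw [h, zero_mul]

/-- The entries of `X(x,a)^r` outside the first row and column, for `r ≤ n - 1`. Only the
entries of `X(x,a)` outside its first column matter, and there it acts as a weighted cyclic shift
of length `n - 1`. -/
theorem pow_Xxa_apply {S : Type*} [CommRing S] {n : ℕ} (hn : 3 ≤ n) (a : S)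
    (X : Matrix (Fin n) (Fin n) S)
    (hX : ∀ i j : Fin n, 1 ≤ (j : ℕ) → X i j =
      if 1 ≤ (i : ℕ) ∧ (j : ℕ) = i + 1 then 1
      else if (i : ℕ) = n - 1 ∧ (j : ℕ) = 1 then a
      else 0)
    (r : ℕ) (hr : r ≤ n - 1) (i j : Fin n) (hi : 1 ≤ (i : ℕ)) (hj : 1 ≤ (j : ℕ)) :
    (X ^ r) i j =
      if (j : ℕ) = i + r then 1 else if (i : ℕ) + r = j + (n - 1) then a else 0 := by
  induction r generalizing j with
  | zero =>
    have hij : (j : ℕ) = i + 0 ↔ i = j := by rw [Fin.ext_iff]; omega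
    have hlt : ¬ (i : ℕ) + 0 = j + (n - 1) := by omega
    rw [pow_zero, Matrix.one_apply, if_neg hlt]
    simp only [hij]
  | succ r ih =>
    rw [pow_succ, Matrix.mul_apply]
    rcases Nat.lt_or_ge 1 (j : ℕ) with hj2 | hj1
    · let k : Fin n := ⟨(j : ℕ) - 1, by omega⟩
      have hk : (k : ℕ) = j - 1 := rfl
      have hkj : X k j = 1 := by rw [hX k j hj, if_pos (by omega)]
      rw [Finset.sum_eq_single k, ih (by omega) k (by omega), hkj, mul_one]
      · split_ifs <;> first | rfl | omega
      · intro l _ hl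
        have hl' : (l : ℕ) ≠ k := fun h => hl (Fin.ext h)
        rw [hX l j hj, if_neg (by omega), if_neg (by omega), mul_zero]
      · simp
    · let k : Fin n := ⟨n - 1, by omega⟩
      have hk : (k : ℕ) = n - 1 := rfl
      have hkj : X k j = a := by
        rw [hX k j hj, if_neg (by omega), if_pos (by omega)]
      rw [Finset.sum_eq_single k, ih (by omega) k (by omega), hkj]
      · split_ifs <;> first | omega | simp
      · intro l _ hl
        have hl' : (l : ℕ) ≠ k := fun h => hl (Fin.ext h)
        rw [hX l j hj, if_neg (by omega), if_neg (by omega), mul_zero]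
      · simp

/-- Traces of powers of the matrix `X(x,a)`: `tr(X(x,a)^r) = 0` for `r = 1, …, n-2` and
`tr(X(x,a)^{n-1}) = (n-1)·a`. Indices are `0`-based: entry `(i, i+1)` equals `1` for
`1 ≤ i ≤ n-2`, entry `(i, 0)` equals `x_{i-1}` for `1 ≤ i`, entry `(n-1, 1)` equals `a`. -/
theorem trace_pow_Xxa {S : Type*} [CommRing S] {n : ℕ} (hn : 3 ≤ n)
    (x : Fin (n - 1) → S) (a : S) (X : Matrix (Fin n) (Fin n) S)
    (hX : ∀ i j : Fin n, X i j =
      if 1 ≤ (i : ℕ) ∧ (i : ℕ) ≤ n - 2 ∧ (j : ℕ) = (i : ℕ) + 1 then 1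
      else if (j : ℕ) = 0 ∧ 1 ≤ (i : ℕ) then x ⟨(i : ℕ) - 1, by have := i.isLt; omega⟩
      else if (i : ℕ) = n - 1 ∧ (j : ℕ) = 1 then a
      else 0) :
    (∀ r : ℕ, 1 ≤ r → r ≤ n - 2 → (X ^ r).trace = 0) ∧
      (X ^ (n - 1)).trace = ((n - 1 : ℕ) : S) * a := by
  have hrow : ∀ i : Fin n, (i : ℕ) = 0 → ∀ j, X i j = 0 := fun i hi j => by
    rw [hX i j, if_neg (by omega), if_neg (by omega), if_neg (by omega)]
  have hshift : ∀ i j : Fin n, 1 ≤ (j : ℕ) → X i j =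
      if 1 ≤ (i : ℕ) ∧ (j : ℕ) = i + 1 then 1
      else if (i : ℕ) = n - 1 ∧ (j : ℕ) = 1 then a
      else 0 := fun i j hj => by
    rw [hX i j]
    split_ifs <;> first | rfl | omega
  refine ⟨fun r hr1 hr2 => Finset.sum_eq_zero fun i _ => ?_, ?_⟩
  · rw [Matrix.diag_apply]
    rcases Nat.eq_zero_or_pos (i : ℕ) with hi | hi
    · exact pow_apply_eq_zero_of_row_eq_zero (hrow i hi) hr1 i
    · rw [pow_Xxa_apply hn a X hshift r (by omega) i i hi hi, if_neg (by omega), if_neg (by omega)]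
  · obtain ⟨m, rfl⟩ : ∃ m, n = m + 1 := ⟨n - 1, by omega⟩
    have hdiag : ∀ i : Fin m, (X ^ (m + 1 - 1)) i.succ i.succ = a := fun i => by
      have hi : 1 ≤ (i.succ : ℕ) := by simp
      rw [pow_Xxa_apply hn a X hshift _ le_rfl i.succ i.succ hi hi, if_neg (by omega), if_pos rfl]
    rw [Matrix.trace, Fin.sum_univ_succ]
    simp only [Matrix.diag_apply, hdiag]
    rw [pow_apply_eq_zero_of_row_eq_zero (hrow 0 rfl) (by omega)]
    simp
end

section
/- Let K be a field, n ≥ 3, x = (x_1, …, x_{n−1})ᵀ ∈ K^{n−1}, and a ∈ K, and let X(x,a) ∈ M_n(K) be the matrix with entries m_{i,i+1} = 1 for i = 2, …, n−1, m_{i,1} = x_{i−1} for i = 2, …, n, m_{n,2} = a, and all other entries zero. If x_{n−1} ≠ 0 or a ≠ 0, then X(x,a) is gl_n(K)-regular. Moreover, if a ≠ 0, then X(x,a) is sl_n(K)-regular. -/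
open Matrix

/-- A matrix with a cyclic row vector has centralizer of dimension `n`. -/
theorem finrank_glCent_of_cyclic {K : Type*} [Field K] {n : ℕ} (X : Matrix (Fin n) (Fin n) K)
    (v : Fin n → K) (hv : ∀ w : Fin n → K, ∃ p : Polynomial K, v ᵥ* Polynomial.aeval X p = w) :
    Module.finrank K (glCent X) = n := by
  let φ : glCent X →ₗ[K] (Fin n → K) :=
    { toFun := fun Y => v ᵥ* (Y : Matrix (Fin n) (Fin n) K)
      map_add' := fun Y Z => by simp [Matrix.vecMul_add]
      map_smul' := fun c Y => by simp [Matrix.vecMul_smul] }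
  have hcomm (p : Polynomial K) (Y : Matrix (Fin n) (Fin n) K) (hY : X * Y = Y * X) :
      Polynomial.aeval X p * Y = Y * Polynomial.aeval X p :=
    (Algebra.commute_of_mem_adjoin_singleton_of_commute
      (Polynomial.aeval_mem_adjoin_singleton K X) (show Commute Y X from hY.symm)).symm
  have hinj : Function.Injective φ := by
    rw [← LinearMap.ker_eq_bot, LinearMap.ker_eq_bot']
    rintro ⟨Y, hY⟩ h
    have h' : v ᵥ* Y = 0 := h
    ext i j
    obtain ⟨p, hp⟩ := hv (Pi.single i 1)
    have h1 : Pi.single i 1 ᵥ* Y = 0 := by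
      rw [← hp, Matrix.vecMul_vecMul, hcomm p Y hY, ← Matrix.vecMul_vecMul, h',
        Matrix.zero_vecMul]
    simpa using congrFun h1 j
  have hsurj : Function.Surjective φ := fun w => by
    obtain ⟨p, hp⟩ := hv w
    exact ⟨⟨Polynomial.aeval X p, (hcomm p X rfl).symm⟩, hp⟩
  simpa using (LinearEquiv.ofBijective φ ⟨hinj, hsurj⟩).finrank_eq

/-- If some matrix commuting with `X` has nonzero trace, the trace-zero centralizer has
codimension one in the centralizer. -/
theorem finrank_slCent_add_one {K : Type*} [Field K] {n : ℕ} (X : Matrix (Fin n) (Fin n) K)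
    (Z : Matrix (Fin n) (Fin n) K) (hZ : X * Z = Z * X) (hZt : Z.trace ≠ 0) :
    Module.finrank K (slCent X) + 1 = Module.finrank K (glCent X) := by
  let τ : glCent X →ₗ[K] K := (Matrix.traceLinearMap (Fin n) K K) ∘ₗ (glCent X).subtype
  have hτ : τ ≠ 0 := fun h => hZt (congrArg (fun f => f ⟨Z, hZ⟩) h)
  have hker : (LinearMap.ker τ).map (glCent X).subtype = slCent X := by
    ext Y
    constructor
    · rintro ⟨W, hW, rfl⟩
      exact ⟨hW, W.2⟩
    · rintro ⟨h1, h2⟩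
      exact ⟨⟨Y, h2⟩, h1, rfl⟩
  rw [← hker, Submodule.finrank_map_subtype_eq]
  exact Module.Dual.finrank_ker_add_one_of_ne_zero hτ

/-- The row vector with a one in position `k`, which is zero for `k ≥ n`. -/
def rowUnit (K : Type*) [Field K] (n k : ℕ) : Fin n → K := fun j => if (j : ℕ) = k then 1 else 0

theorem rowUnit_val {K : Type*} [Field K] {n : ℕ} (i : Fin n) :
    rowUnit K n i = Pi.single i 1 := by
  ext j
  simp [rowUnit, Pi.single_apply, Fin.ext_iff]

theorem rowUnit_vecMul {K : Type*} [Field K] {n : ℕ} (X : Matrix (Fin n) (Fin n) K) (i : Fin n) :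
    rowUnit K n i ᵥ* X = X i := by
  rw [rowUnit_val, Matrix.single_one_vecMul]
  rfl

section RowRelations

variable {K : Type*} [Field K] {m : ℕ} {X : Matrix (Fin (m + 1)) (Fin (m + 1)) K} {y : ℕ → K}
  {a : K}

theorem rowUnit_one_vecMul_pow (hy : y 0 = 0) (h0 : rowUnit K (m + 1) 0 ᵥ* X = 0)
    (hs : ∀ k, 1 ≤ k → k < m →
      rowUnit K (m + 1) k ᵥ* X = rowUnit K (m + 1) (k + 1) + y k • rowUnit K (m + 1) 0)
    (k : ℕ) (hk : k < m) :
    rowUnit K (m + 1) 1 ᵥ* X ^ k = rowUnit K (m + 1) (k + 1) + y k • rowUnit K (m + 1) 0 := by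
  induction k with
  | zero => simp [hy]
  | succ k ih =>
    rw [pow_succ, ← Matrix.vecMul_vecMul, ih (by omega), Matrix.add_vecMul, Matrix.smul_vecMul, h0,
      smul_zero, add_zero, hs (k + 1) (by omega) hk]

theorem rowUnit_one_vecMul_pow_top (hm : 1 ≤ m) (hy : y 0 = 0)
    (h0 : rowUnit K (m + 1) 0 ᵥ* X = 0)
    (hs : ∀ k, 1 ≤ k → k < m →
      rowUnit K (m + 1) k ᵥ* X = rowUnit K (m + 1) (k + 1) + y k • rowUnit K (m + 1) 0)
    (hl : rowUnit K (m + 1) m ᵥ* X = y m • rowUnit K (m + 1) 0 + a • rowUnit K (m + 1) 1) :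
    rowUnit K (m + 1) 1 ᵥ* X ^ m = y m • rowUnit K (m + 1) 0 + a • rowUnit K (m + 1) 1 := by
  obtain ⟨l, rfl⟩ := Nat.exists_eq_add_of_le' hm
  rw [pow_succ, ← Matrix.vecMul_vecMul, rowUnit_one_vecMul_pow hy h0 hs l (by omega),
    Matrix.add_vecMul, Matrix.smul_vecMul, h0, smul_zero, add_zero, hl]

theorem rowUnit_zero_vecMul_pow (h0 : rowUnit K (m + 1) 0 ᵥ* X = 0) (k : ℕ) (hk : k ≠ 0) :
    rowUnit K (m + 1) 0 ᵥ* X ^ k = 0 := by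
  obtain ⟨l, rfl⟩ := Nat.exists_eq_succ_of_ne_zero hk
  rw [pow_succ', ← Matrix.vecMul_vecMul, h0, Matrix.zero_vecMul]

theorem cyclic_of_row_relations (hm : 1 ≤ m) (hy : y 0 = 0)
    (h0 : rowUnit K (m + 1) 0 ᵥ* X = 0)
    (hs : ∀ k, 1 ≤ k → k < m →
      rowUnit K (m + 1) k ᵥ* X = rowUnit K (m + 1) (k + 1) + y k • rowUnit K (m + 1) 0)
    (hl : rowUnit K (m + 1) m ᵥ* X = y m • rowUnit K (m + 1) 0 + a • rowUnit K (m + 1) 1)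
    (c : K) (hc : y m - a * c ≠ 0) (w : Fin (m + 1) → K) :
    ∃ p : Polynomial K,
      (rowUnit K (m + 1) 1 + c • rowUnit K (m + 1) 0) ᵥ* Polynomial.aeval X p = w := by
  set v := rowUnit K (m + 1) 1 + c • rowUnit K (m + 1) 0 with hv
  let φ : Polynomial K →ₗ[K] (Fin (m + 1) → K) :=
    { toFun := fun p => v ᵥ* Polynomial.aeval X p
      map_add' := fun p q => by simp [Matrix.vecMul_add]
      map_smul' := fun c p => by simp [Matrix.vecMul_smul] }
  have hpow (k : ℕ) : v ᵥ* X ^ k ∈ LinearMap.range φ := ⟨Polynomial.X ^ k, by simp [φ]⟩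
  have hvk (k : ℕ) (hk : k ≠ 0) : v ᵥ* X ^ k = rowUnit K (m + 1) 1 ᵥ* X ^ k := by
    rw [hv, Matrix.add_vecMul, Matrix.smul_vecMul, rowUnit_zero_vecMul_pow h0 k hk, smul_zero,
      add_zero]
  have hv0 : v ∈ LinearMap.range φ := by simpa using hpow 0
  have hz : rowUnit K (m + 1) 0 ∈ LinearMap.range φ := by
    have h := sub_mem (hpow m) (Submodule.smul_mem _ a hv0)
    rw [hvk m (by omega), rowUnit_one_vecMul_pow_top hm hy h0 hs hl] at h
    have h' : y m • rowUnit K (m + 1) 0 + a • rowUnit K (m + 1) 1 - a • v =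
        (y m - a * c) • rowUnit K (m + 1) 0 := by
      rw [hv]
      module
    rw [h'] at h
    exact (Submodule.smul_mem_iff _ hc).1 h
  have hunit (k : ℕ) (hk : k < m + 1) : rowUnit K (m + 1) k ∈ LinearMap.range φ := by
    match k with
    | 0 => exact hz
    | 1 => simpa [hv] using sub_mem hv0 (Submodule.smul_mem _ c hz)
    | k + 2 =>
      have h := sub_mem (hpow (k + 1)) (Submodule.smul_mem _ (y (k + 1)) hz)
      rwa [hvk _ (by omega), rowUnit_one_vecMul_pow hy h0 hs (k + 1) (by omega),
        add_sub_cancel_right] at h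
  have hw : w ∈ LinearMap.range φ := by
    rw [pi_eq_sum_univ' w]
    refine Submodule.sum_mem _ fun i _ => Submodule.smul_mem _ _ ?_
    convert hunit i i.2 using 1
    rw [rowUnit_val]
  exact hw

theorem trace_pow_of_row_relations (hm : 1 ≤ m) (hy : y 0 = 0)
    (h0 : rowUnit K (m + 1) 0 ᵥ* X = 0)
    (hs : ∀ k, 1 ≤ k → k < m →
      rowUnit K (m + 1) k ᵥ* X = rowUnit K (m + 1) (k + 1) + y k • rowUnit K (m + 1) 0)
    (hl : rowUnit K (m + 1) m ᵥ* X = y m • rowUnit K (m + 1) 0 + a • rowUnit K (m + 1) 1) :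
    (X ^ m).trace = m * a := by
  have hz := rowUnit_zero_vecMul_pow h0
  have hzero : (X ^ m) 0 0 = 0 := by
    have h := hz m (by omega)
    rw [show 0 = ((0 : Fin (m + 1)) : ℕ) from rfl, rowUnit_vecMul] at h
    exact congrFun h 0
  have hsucc (i : Fin m) : (X ^ m) i.succ i.succ = a := by
    have h := rowUnit_one_vecMul_pow hy h0 hs i i.2
    have h2 : rowUnit K (m + 1) i.succ ᵥ* X ^ m =
        y m • (rowUnit K (m + 1) 0 ᵥ* X ^ (i : ℕ)) + a • (rowUnit K (m + 1) 1 ᵥ* X ^ (i : ℕ)) := by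
      rw [Fin.val_succ, eq_sub_of_add_eq h.symm, Matrix.sub_vecMul, Matrix.smul_vecMul,
        hz m (by omega), smul_zero, sub_zero, Matrix.vecMul_vecMul, ← pow_add, add_comm (i : ℕ) m, pow_add,
        ← Matrix.vecMul_vecMul, rowUnit_one_vecMul_pow_top hm hy h0 hs hl, Matrix.add_vecMul,
        Matrix.smul_vecMul, Matrix.smul_vecMul]
    have h3 : (rowUnit K (m + 1) 0 ᵥ* X ^ (i : ℕ)) i.succ = 0 := by
      rcases Nat.eq_zero_or_pos (i : ℕ) with hi | hi
      · simp [hi, rowUnit]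
      · rw [hz _ (by omega)]
        rfl
    rw [rowUnit_vecMul, h] at h2
    have h4 := congrFun h2 i.succ
    simp only [Pi.add_apply, Pi.smul_apply, h3] at h4
    simpa [rowUnit] using h4
  rw [Matrix.trace, Fin.sum_univ_succ]
  simp [hzero, hsucc]

end RowRelations

/-- Regularity of `X(x,a)`: if `x_{n-1} ≠ 0` or `a ≠ 0` then `X(x,a)` is `gl_n(K)`-regular,
and if `a ≠ 0` then `X(x,a)` is `sl_n(K)`-regular. Indices are `0`-based: entry `(i, i+1)`
equals `1` for `1 ≤ i ≤ n-2`, entry `(i, 0)` equals `x_{i-1}` for `1 ≤ i`, and entry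
`(n-1, 1)` equals `a`. -/
theorem Xxa_regular {K : Type*} [Field K] {n : ℕ} (hn : 3 ≤ n)
    (x : Fin (n - 1) → K) (a : K) (X : Matrix (Fin n) (Fin n) K)
    (hX : ∀ i j : Fin n, X i j =
      if 1 ≤ (i : ℕ) ∧ (i : ℕ) ≤ n - 2 ∧ (j : ℕ) = (i : ℕ) + 1 then 1
      else if (j : ℕ) = 0 ∧ 1 ≤ (i : ℕ) then x ⟨(i : ℕ) - 1, by have := i.isLt; omega⟩
      else if (i : ℕ) = n - 1 ∧ (j : ℕ) = 1 then a
      else 0) :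
    ((x ⟨n - 2, by omega⟩ ≠ 0 ∨ a ≠ 0) → Module.finrank K (glCent X) = n) ∧
      (a ≠ 0 → Module.finrank K (slCent X) = n - 1) := by
  obtain ⟨m, rfl⟩ : ∃ m, n = m + 1 := ⟨n - 1, by omega⟩
  let y : ℕ → K := fun k => if h : 1 ≤ k ∧ k ≤ m then x ⟨k - 1, by omega⟩ else 0
  have hy : y 0 = 0 := by simp [y]
  have hym : y m = x ⟨m + 1 - 2, by omega⟩ := by
    simp only [y]
    rw [dif_pos (by omega)]
    congr 1
  have h0 : rowUnit K (m + 1) 0 ᵥ* X = 0 := by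
    rw [show 0 = ((0 : Fin (m + 1)) : ℕ) from rfl, rowUnit_vecMul]
    ext j
    rw [hX]
    simp
    omega
  have hs : ∀ k, 1 ≤ k → k < m →
      rowUnit K (m + 1) k ᵥ* X = rowUnit K (m + 1) (k + 1) + y k • rowUnit K (m + 1) 0 := by
    intro k hk1 hkm
    have h := rowUnit_vecMul X ⟨k, by omega⟩
    simp only at h
    rw [h]
    ext j
    rw [hX]
    simp only [rowUnit, y, Pi.add_apply, Pi.smul_apply, smul_eq_mul]
    grind
  have hl : rowUnit K (m + 1) m ᵥ* X = y m • rowUnit K (m + 1) 0 + a • rowUnit K (m + 1) 1 := by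
    have h := rowUnit_vecMul X ⟨m, by omega⟩
    simp only at h
    rw [h]
    ext j
    rw [hX]
    simp only [rowUnit, y, Pi.add_apply, Pi.smul_apply, smul_eq_mul]
    grind
  have hm : 1 ≤ m := by omega
  have hgl : (x ⟨m + 1 - 2, by omega⟩ ≠ 0 ∨ a ≠ 0) → Module.finrank K (glCent X) = m + 1 := by
    intro h
    rw [← hym] at h
    obtain ⟨c, hc⟩ : ∃ c, y m - a * c ≠ 0 := by
      by_cases hx : y m = 0
      · exact ⟨1, by simpa [hx] using h⟩
      · exact ⟨0, by simpa using hx⟩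
    exact finrank_glCent_of_cyclic X _ (cyclic_of_row_relations hm hy h0 hs hl c hc)
  refine ⟨hgl, fun ha => ?_⟩
  obtain ⟨Z, hZ, hZt⟩ : ∃ Z, X * Z = Z * X ∧ Z.trace ≠ 0 := by
    by_cases hmK : (m : K) = 0
    · exact ⟨1, by simp, by simp [hmK]⟩
    · refine ⟨X ^ m, (pow_mul_comm' X m).symm, ?_⟩
      rw [trace_pow_of_row_relations hm hy h0 hs hl]
      exact mul_ne_zero hmK ha
  have h := finrank_slCent_add_one X Z hZ hZt
  rw [hgl (Or.inr ha)] at h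
  omega
end

section
/- Let K be a field of characteristic 2. A trace-zero matrix A ∈ sl_2(K) can be written as A = XY − YX with X, Y ∈ sl_2(K) both of trace zero if and only if A is a scalar matrix. -/
open Matrix

/-- Over a field of characteristic `2`, a trace-zero `2 × 2` matrix is a commutator of two
trace-zero matrices if and only if it is scalar. -/
theorem sl2_commutator_iff_scalar_char_two {K : Type*} [Field K] (hchar : ringChar K = 2)
    (A : Matrix (Fin 2) (Fin 2) K) (hA : A.trace = 0) :
    (∃ X Y : Matrix (Fin 2) (Fin 2) K, X.trace = 0 ∧ Y.trace = 0 ∧ X * Y - Y * X = A) ↔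
      ∃ c : K, A = c • (1 : Matrix (Fin 2) (Fin 2) K) := by
  have h2 : (2 : K) = 0 := by
    have h := ringChar.Nat.cast_ringChar (R := K)
    rw [hchar] at h
    exact_mod_cast h
  constructor
  · rintro ⟨X, Y, hX, hY, rfl⟩
    rw [trace_fin_two] at hX hY
    refine ⟨X 0 1 * Y 1 0 - Y 0 1 * X 1 0, ?_⟩
    ext i j
    fin_cases i <;> fin_cases j <;> simp [mul_apply, Fin.sum_univ_two]
    · ring
    · linear_combination X 0 1 * hY - Y 0 1 * hX + (X 0 0 * Y 0 1 - X 0 1 * Y 0 0) * h2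
    · linear_combination Y 1 0 * hX - X 1 0 * hY + (X 1 0 * Y 0 0 - X 0 0 * Y 1 0) * h2
    · linear_combination (X 1 0 * Y 0 1 - X 0 1 * Y 1 0) * h2
  · rintro ⟨c, rfl⟩
    refine ⟨!![0, c; 0, 0], !![0, 0; 1, 0], by simp [trace_fin_two], by simp [trace_fin_two], ?_⟩
    ext i j
    fin_cases i <;> fin_cases j <;> simp
    linear_combination -c * h2
end

section
/- Let K be a field of characteristic different from 2. Then every trace-zero matrix A ∈ sl_2(K) can be written as A = XY − YX for some trace-zero matrices X, Y ∈ sl_2(K). -/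
open Matrix

/-- Over a field of characteristic different from `2`, every trace-zero `2 × 2` matrix is a
commutator of two trace-zero matrices. -/
theorem sl2_commutator_char_ne_two {K : Type*} [Field K] (hchar : ringChar K ≠ 2)
    (A : Matrix (Fin 2) (Fin 2) K) (hA : A.trace = 0) :
    ∃ X Y : Matrix (Fin 2) (Fin 2) K, X.trace = 0 ∧ Y.trace = 0 ∧ X * Y - Y * X = A := by
  have h2 : (2 : K) ≠ 0 := Ring.two_ne_zero hchar
  have hd : A 1 1 = -A 0 0 := by
    rw [trace_fin_two] at hA
    exact eq_neg_of_add_eq_zero_right hA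
  by_cases hb : A 0 1 = 0
  · refine ⟨!![0, 0; 1, 0], !![A 1 0 / 2, -A 0 0; 0, -(A 1 0 / 2)], by simp [trace_fin_two],
      by simp [trace_fin_two], ?_⟩
    ext i j
    fin_cases i <;> fin_cases j <;> simp [hb, hd]
    field_simp
    ring
  · refine ⟨!![A 0 1 / 2, 0; -A 0 0, -(A 0 1 / 2)], !![0, 1; -(A 1 0 / A 0 1), 0],
      by simp [trace_fin_two], by simp [trace_fin_two], ?_⟩
    ext i j
    fin_cases i <;> fin_cases j <;> simp [hd] <;> field_simp <;> ring
end

section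
/- Let S be a commutative ring with identity and n ≥ 1 such that n·1 = 0 in S. Then for every λ ∈ S there exist trace-zero matrices X, Y ∈ sl_n(S) such that XY − YX = λ·1_n, and X can be taken to be the matrix with ones on the superdiagonal and zeros elsewhere (in particular, a companion matrix, hence gl_n(S)-regular). -/
open Matrix

/-- If `n·1 = 0` in the commutative ring `S`, then every scalar matrix `λ·1_n` is a
commutator `[X, Y]` of trace-zero matrices, where `X` can be taken to be the matrix with
ones on the superdiagonal and zeros elsewhere (the companion matrix of `x^n`). -/
theorem scalar_is_commutator_of_char_dvd {S : Type*} [CommRing S] {n : ℕ} (hn : 1 ≤ n)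
    (hns : (n : S) = 0) (lam : S)
    (X : Matrix (Fin n) (Fin n) S)
    (hX : ∀ i j : Fin n, X i j = if (j : ℕ) = (i : ℕ) + 1 then 1 else 0) :
    X.trace = 0 ∧
      ∃ Y : Matrix (Fin n) (Fin n) S,
        Y.trace = 0 ∧ X * Y - Y * X = lam • (1 : Matrix (Fin n) (Fin n) S) := by
  have mul_left (Y : Matrix (Fin n) (Fin n) S) (i j : Fin n) :
      (X * Y) i j = if h : (i : ℕ) + 1 < n then Y ⟨i + 1, h⟩ j else 0 := by
    rw [Matrix.mul_apply]
    split_ifs with h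
    · rw [Finset.sum_eq_single ⟨i + 1, h⟩] <;> simp +contextual [hX, Fin.ext_iff]
    · refine Finset.sum_eq_zero fun k _ => ?_
      rw [hX, if_neg (by omega), zero_mul]
  refine ⟨by simp [Matrix.trace, hX], Matrix.of fun i j : Fin n =>
    if (i : ℕ) = (j : ℕ) + 1 then (i : ℕ) * lam else 0, by simp [Matrix.trace], ?_⟩
  ext i j
  rw [Matrix.sub_apply, mul_left, Matrix.smul_apply, Matrix.one_apply, smul_eq_mul]
  have mul_right : ((Matrix.of fun i j : Fin n =>
      if (i : ℕ) = (j : ℕ) + 1 then ((i : ℕ) : S) * lam else 0) * X) i j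
      = if i = j then ((i : ℕ) : S) * lam else 0 := by
    rw [Matrix.mul_apply]
    simp only [Matrix.of_apply, hX]
    split_ifs with h
    · subst h
      rcases Nat.eq_zero_or_pos (i : ℕ) with h0 | h0
      · simp [h0]
      · rw [Finset.sum_eq_single ⟨i - 1, by omega⟩]
        · simp [Nat.sub_add_cancel h0]
        · intro k _ hk
          rw [if_neg (fun e => hk (Fin.ext (by simp; omega))), zero_mul]
        · simp
    · refine Finset.sum_eq_zero fun k _ => ?_
      by_cases hk : (i : ℕ) = k + 1
      · rw [if_neg (c := (j : ℕ) = k + 1) (fun e => h (Fin.ext (by omega))), mul_zero]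
      · rw [if_neg hk, zero_mul]
  rw [mul_right]
  by_cases hij : i = j
  · subst hij
    by_cases h : (i : ℕ) + 1 < n
    · simp [h]
      ring
    · have hi : ((i : ℕ) : S) + 1 = 0 := by
        rw [← hns, ← Nat.cast_add_one, show (i : ℕ) + 1 = n by omega]
      simp only [h, dite_false, if_true]
      linear_combination -lam * hi
  · have : (i : ℕ) ≠ j := fun e => hij (Fin.ext e)
    simp [hij, this]
end

section
/- Let K be a field, n ≥ 1, λ ∈ K with λ ≠ 0, and suppose X ∈ sl_n(K) is gl_n(K)-regular and XY − YX = λ·1_n for some Y ∈ M_n(K). Then X is not sl_n(K)-regular; indeed tr(X^i) = 0 for all i = 0, …, n−1. -/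
open Matrix

/-- If `X * Y - Y * X` is a nonzero scalar matrix, every matrix commuting with `X` has trace
zero. -/
theorem trace_eq_zero_of_commute_of_commutator_eq_scalar {K ι : Type*} [Field K] [Fintype ι]
    [DecidableEq ι] {lam : K} (hlam : lam ≠ 0) {X Y Z : Matrix ι ι K}
    (hXY : X * Y - Y * X = lam • (1 : Matrix ι ι K)) (hZ : X * Z = Z * X) :
    Z.trace = 0 := by
  have h : (Z * (X * Y - Y * X)).trace = 0 := by
    rw [Matrix.mul_sub, trace_sub, ← Matrix.mul_assoc, ← Matrix.mul_assoc,
      trace_mul_comm (Z * Y) X, ← Matrix.mul_assoc, hZ, sub_self]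
  rw [hXY, Matrix.mul_smul, Matrix.mul_one, trace_smul, smul_eq_mul] at h
  exact (mul_eq_zero.mp h).resolve_left hlam

/-- If `X` is `gl_n(K)`-regular, trace zero, and `[X, Y] = λ·1_n` with `λ ≠ 0`, then
`tr(X^i) = 0` for `i = 0, …, n-1` and `X` is not `sl_n(K)`-regular. -/
theorem not_slRegular_of_commutator_eq_scalar {K : Type*} [Field K] {n : ℕ} (hn : 1 ≤ n)
    (lam : K) (hlam : lam ≠ 0)
    (X : Matrix (Fin n) (Fin n) K) (hX : X.trace = 0)
    (hreg : Module.finrank K (glCent X) = n)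
    (Y : Matrix (Fin n) (Fin n) K)
    (hXY : X * Y - Y * X = lam • (1 : Matrix (Fin n) (Fin n) K)) :
    (∀ i : ℕ, i ≤ n - 1 → (X ^ i).trace = 0) ∧
      Module.finrank K (slCent X) ≠ n - 1 := by
  have htr {Z : Matrix (Fin n) (Fin n) K} (hZ : X * Z = Z * X) : Z.trace = 0 :=
    trace_eq_zero_of_commute_of_commutator_eq_scalar hlam hXY hZ
  refine ⟨fun i _ => htr ((Commute.refl X).pow_right i), ?_⟩
  have hcent : slCent X = glCent X := by
    ext Z
    exact ⟨fun h => h.2, fun h => ⟨htr h, h⟩⟩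
  rw [hcent, hreg]
  omega
end

section
/- Let K be a field and A ∈ sl_n(K) a trace-zero matrix with n ≥ 3. Then there exist trace-zero matrices X, Y ∈ sl_n(K) such that XY − YX = A. Moreover, if A is scalar, X can be chosen to be gl_n(K)-regular, and if A is non-scalar, X can be chosen to be sl_n(K)-regular. -/
open Matrix

namespace RegularCommutator

open Module Polynomial

variable {K : Type*} [Field K] {ι κ : Type*} [Fintype ι] [DecidableEq ι] [Fintype κ]
  [DecidableEq κ]

/-! ### Centralizers and cyclic vectors -/

/-- The centralizer of `X` in the full matrix algebra, as a subspace. -/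
def cent (X : Matrix ι ι K) : Submodule K (Matrix ι ι K) :=
  LinearMap.ker (LinearMap.mulLeft K X - LinearMap.mulRight K X)

theorem mem_cent {X Z : Matrix ι ι K} : Z ∈ cent X ↔ X * Z = Z * X := by
  simp [cent, sub_eq_zero]

/-- `v` is a cyclic row vector for `X`: it lies in no proper `X`-stable subspace. -/
def IsCyclicRow (X : Matrix ι ι K) (v : ι → K) : Prop :=
  ∀ W : Submodule K (ι → K), v ∈ W → (∀ w ∈ W, w ᵥ* X ∈ W) → W = ⊤

theorem IsCyclicRow.eq_zero {X : Matrix ι ι K} {v : ι → K} (hv : IsCyclicRow X v)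
    {Z : Matrix ι ι K} (hZ : Z ∈ cent X) (h : v ᵥ* Z = 0) : Z = 0 := by
  rw [mem_cent] at hZ
  have hW := hv (LinearMap.ker Z.vecMulLinear) (by simpa using h) (by
    intro w hw
    simp only [LinearMap.mem_ker, vecMulLinear_apply] at hw ⊢
    rw [vecMul_vecMul, hZ, ← vecMul_vecMul, hw, zero_vecMul])
  ext i j
  have : Pi.single i (1 : K) ∈ LinearMap.ker Z.vecMulLinear := hW ▸ Submodule.mem_top
  simpa using congrFun (by simpa using this : Z.row i = 0) j

theorem IsCyclicRow.exists_mem {X : Matrix ι ι K} {v : ι → K} (hv : IsCyclicRow X v)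
    (P : Submodule K (Matrix ι ι K)) (h1 : 1 ∈ P) (hX : ∀ Z ∈ P, Z * X ∈ P) (w : ι → K) :
    ∃ Z ∈ P ⊓ cent X, v ᵥ* Z = w := by
  have hW := hv ((P ⊓ cent X).map (vecMulBilin K K v)) ⟨1, ⟨h1, by simp [mem_cent]⟩, by simp⟩ (by
    rintro _ ⟨Z, ⟨hZ, hZ'⟩, rfl⟩
    refine ⟨Z * X, ⟨hX Z hZ, ?_⟩, by simp⟩
    rw [SetLike.mem_coe, mem_cent] at hZ' ⊢
    rw [← mul_assoc, hZ'])
  have : w ∈ (P ⊓ cent X).map (vecMulBilin K K v) := hW ▸ Submodule.mem_top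
  obtain ⟨Z, hZ, h⟩ := this
  exact ⟨Z, hZ, by simpa using h⟩

theorem IsCyclicRow.cent_le {X : Matrix ι ι K} {v : ι → K} (hv : IsCyclicRow X v)
    (P : Submodule K (Matrix ι ι K)) (h1 : 1 ∈ P) (hX : ∀ Z ∈ P, Z * X ∈ P) : cent X ≤ P := by
  intro Z hZ
  obtain ⟨Z', ⟨hP, hc⟩, h⟩ := hv.exists_mem P h1 hX (v ᵥ* Z)
  have : Z - Z' = 0 := hv.eq_zero (sub_mem hZ hc) (by rw [vecMul_sub, h, sub_self])
  rwa [sub_eq_zero.mp this]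

theorem IsCyclicRow.finrank_cent {X : Matrix ι ι K} {v : ι → K} (hv : IsCyclicRow X v) :
    finrank K (cent X) = Fintype.card ι := by
  let f : cent X →ₗ[K] (ι → K) := (vecMulBilin K K v).comp (cent X).subtype
  have hf : Function.Bijective f := by
    refine ⟨(injective_iff_map_eq_zero f).2 fun Z hZ => Subtype.ext (hv.eq_zero Z.2 hZ),
      fun w => ?_⟩
    obtain ⟨Z, hZ, h⟩ := hv.exists_mem ⊤ trivial (fun _ _ => trivial) w
    exact ⟨⟨Z, hZ.2⟩, h⟩
  rw [(LinearEquiv.ofBijective f hf).finrank_eq, finrank_fintype_fun_eq_card]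

/-- The image of `ad X` is the orthogonal of the centralizer for the trace form. -/
theorem exists_commutator_of_trace {X A : Matrix ι ι K}
    (h : ∀ Z ∈ cent X, (Z * A).trace = 0) : ∃ Y, X * Y - Y * X = A := by
  by_contra hA
  have hmem : A ∉ LinearMap.range (LinearMap.mulLeft K X - LinearMap.mulRight K X) := by
    rintro ⟨Y, hY⟩
    exact hA ⟨Y, by simpa using hY⟩
  obtain ⟨f, hfA, hf⟩ := Submodule.exists_le_ker_of_notMem hmem
  let W : Matrix ι ι K := of fun i j => f (single j i 1)
  have hW : ∀ M, f M = (W * M).trace := by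
    intro M
    have : f = (traceLinearMap ι K K).comp (LinearMap.mulLeft K W) := by
      refine (stdBasis K ι ι).ext fun ⟨i, j⟩ => ?_
      simp [W, stdBasis_eq_single, trace_mul_single]
    rw [this]; rfl
  apply hfA
  rw [hW]
  apply h
  rw [mem_cent, eq_comm, ext_iff_trace_mul_right]
  intro Y
  have := hf ⟨Y, rfl⟩
  simp only [LinearMap.mem_ker, LinearMap.sub_apply, LinearMap.mulLeft_apply,
    LinearMap.mulRight_apply, hW, mul_sub, trace_sub, sub_eq_zero] at this
  rw [mul_assoc, this, ← mul_assoc, trace_mul_comm, mul_assoc]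

/-- `X` is regular and `A` lies in the image of `ad X`. -/
def RegComm (X A : Matrix ι ι K) : Prop :=
  finrank K (cent X) = Fintype.card ι ∧ ∃ Y, X * Y - Y * X = A

theorem IsCyclicRow.regComm {X A : Matrix ι ι K} {v : ι → K} (hv : IsCyclicRow X v)
    (P : Submodule K (Matrix ι ι K)) (h1 : 1 ∈ P) (hX : ∀ Z ∈ P, Z * X ∈ P)
    (hA : ∀ Z ∈ P, (Z * A).trace = 0) : RegComm X A :=
  ⟨hv.finrank_cent, exists_commutator_of_trace fun Z hZ => hA Z (hv.cent_le P h1 hX hZ)⟩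

/-! ### Similarity across index types -/

/-- `B` is obtained from `A` by a change of basis, possibly with a different index type. -/
def Sim (A : Matrix ι ι K) (B : Matrix κ κ K) : Prop :=
  ∃ (P : Matrix κ ι K) (Q : Matrix ι κ K), P * Q = 1 ∧ Q * P = 1 ∧ B = P * A * Q

theorem Sim.refl (A : Matrix ι ι K) : Sim A A := ⟨1, 1, by simp, by simp, by simp⟩

theorem Sim.trans {μ : Type*} [Fintype μ] [DecidableEq μ] {A : Matrix ι ι K} {B : Matrix κ κ K}
    {C : Matrix μ μ K} (h : Sim A B) (h' : Sim B C) : Sim A C := by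
  obtain ⟨P, Q, h1, h2, rfl⟩ := h
  obtain ⟨R, S, h3, h4, rfl⟩ := h'
  refine ⟨R * P, Q * S, ?_, ?_, by simp only [Matrix.mul_assoc]⟩
  · rw [Matrix.mul_assoc, ← Matrix.mul_assoc P, h1, Matrix.one_mul, h3]
  · rw [Matrix.mul_assoc, ← Matrix.mul_assoc S, h4, Matrix.one_mul, h2]

theorem Sim.trace_eq {A : Matrix ι ι K} {B : Matrix κ κ K} (h : Sim A B) :
    B.trace = A.trace := by
  obtain ⟨P, Q, h1, h2, rfl⟩ := h
  rw [trace_mul_comm, ← Matrix.mul_assoc, h2, Matrix.one_mul]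

theorem Sim.submatrix (A : Matrix ι ι K) (e : κ ≃ ι) : Sim A (A.submatrix e e) := by
  refine ⟨(1 : Matrix ι ι K).submatrix e id, (1 : Matrix ι ι K).submatrix id e, ?_, ?_, ?_⟩
  · rw [submatrix_mul _ _ e id e Function.bijective_id |>.symm]
    simp
  · rw [submatrix_mul _ _ id e id e.bijective |>.symm]
    simp
  · ext i j
    simp [Matrix.mul_apply, Matrix.one_apply]

/-- Being a scalar matrix. -/
def IsScalar (A : Matrix ι ι K) : Prop := ∃ c : K, A = c • (1 : Matrix ι ι K)

/-- Row `k` gains `t` times row `i`, then column `i` loses `t` times column `k`. -/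
theorem sim_transvection (A : Matrix ι ι K) {k i : ι} (hki : k ≠ i) (t : K) :
    Sim A (of fun p q => A p q + (if p = k then t * A i q else 0)
      - (if q = i then t * (A p k + (if p = k then t * A i k else 0)) else 0)) := by
  refine ⟨transvection k i t, transvection k i (-t), ?_, ?_, ?_⟩
  · simp [transvection_mul_transvection_same _ _ hki]
  · simp [transvection_mul_transvection_same _ _ hki]
  · ext p q
    by_cases hp : p = k <;> by_cases hq : q = i
    · subst hp hq; simp; ring
    · subst hp; simp [hq]
    · subst hq; simp [hp]; ring
    · simp [hp, hq]

theorem Sim.fromBlocks {μ : Type*} [Fintype μ] [DecidableEq μ] {B : Matrix κ κ K}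
    {B' : Matrix μ μ K} (h : Sim B B')
    (A : Matrix ι ι K) (R : Matrix ι κ K) (C : Matrix κ ι K) :
    ∃ R' C', Sim (fromBlocks A R C B) (fromBlocks A R' C' B') := by
  obtain ⟨P, Q, h1, h2, rfl⟩ := h
  refine ⟨R * Q, P * C, Matrix.fromBlocks 1 0 0 P, Matrix.fromBlocks 1 0 0 Q, ?_, ?_, ?_⟩
  · simp [fromBlocks_multiply, h1]
  · simp [fromBlocks_multiply, h2]
  · simp [fromBlocks_multiply]

theorem finrank_cent_conj {P : Matrix κ ι K} {Q : Matrix ι κ K} (h1 : P * Q = 1) (h2 : Q * P = 1)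
    (X : Matrix κ κ K) : finrank K (cent (Q * X * P)) = finrank K (cent X) := by
  let f : Matrix κ κ K ≃ₗ[K] Matrix ι ι K :=
    { toFun := fun M => Q * M * P
      invFun := fun M => P * M * Q
      map_add' := fun M N => by simp [Matrix.mul_add, Matrix.add_mul]
      map_smul' := fun c M => by simp
      left_inv := fun M => by
        calc P * (Q * M * P) * Q = (P * Q) * M * (P * Q) := by simp only [Matrix.mul_assoc]
          _ = M := by simp [h1]
      right_inv := fun M => by
        calc Q * (P * M * Q) * P = (Q * P) * M * (Q * P) := by simp only [Matrix.mul_assoc]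
          _ = M := by simp [h2] }
  have hmul : ∀ M N, f M * f N = f (M * N) := fun M N => by
    calc Q * M * P * (Q * N * P) = Q * M * (P * Q) * N * P := by simp only [Matrix.mul_assoc]
      _ = Q * (M * N) * P := by simp [h1, Matrix.mul_assoc]
  have : cent (Q * X * P) = (cent X).map (f : Matrix κ κ K →ₗ[K] Matrix ι ι K) := by
    ext Z
    rw [Submodule.mem_map_equiv, mem_cent, mem_cent]
    obtain ⟨M, rfl⟩ := f.surjective Z
    rw [LinearEquiv.symm_apply_apply]
    change f X * f M = f M * f X ↔ _
    rw [hmul, hmul, f.injective.eq_iff]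
  rw [this, LinearEquiv.finrank_map_eq]

theorem RegComm.conj {P : Matrix κ ι K} {Q : Matrix ι κ K} (h1 : P * Q = 1) (h2 : Q * P = 1)
    {X : Matrix κ κ K} {A : Matrix ι ι K} (h : RegComm X (P * A * Q)) :
    RegComm (Q * X * P) A := by
  obtain ⟨hX, Y, hY⟩ := h
  have hcard : Fintype.card ι = Fintype.card κ := by
    have e : finrank K (ι → K) = finrank K (κ → K) :=
      (LinearEquiv.ofLinearMap (toLin' P) (toLin' Q) (by rw [← toLin'_mul, h1, toLin'_one])
        (by rw [← toLin'_mul, h2, toLin'_one])).finrank_eq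
    simpa using e
  refine ⟨by rw [finrank_cent_conj h1 h2, hX, hcard], Q * Y * P, ?_⟩
  calc Q * X * P * (Q * Y * P) - Q * Y * P * (Q * X * P)
      = Q * X * (P * Q) * Y * P - Q * Y * (P * Q) * X * P := by simp only [Matrix.mul_assoc]
    _ = Q * (X * Y - Y * X) * P := by
        simp [h1, Matrix.mul_assoc, Matrix.mul_sub, Matrix.sub_mul]
    _ = (Q * P) * A * (Q * P) := by rw [hY]; simp only [Matrix.mul_assoc]
    _ = A := by simp [h2]

/-- `A` is a commutator of a trace-zero regular matrix whose centralizer has nonzero trace. -/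
def Good (A : Matrix ι ι K) : Prop :=
  ∃ X, RegComm X A ∧ X.trace = 0 ∧ ∃ Z ∈ cent X, Z.trace ≠ 0

theorem Good.of_sim {A : Matrix ι ι K} {B : Matrix κ κ K} (h : Sim A B) (hB : Good B) :
    Good A := by
  obtain ⟨P, Q, h1, h2, rfl⟩ := h
  obtain ⟨X, hX, htr, Z, hZ, hZt⟩ := hB
  have tr : ∀ M : Matrix κ κ K, (Q * M * P).trace = M.trace := fun M => by
    rw [trace_mul_comm, ← Matrix.mul_assoc, h1, Matrix.one_mul]
  refine ⟨Q * X * P, hX.conj h1 h2, by rw [tr, htr], Q * Z * P, ?_, by rwa [tr]⟩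
  rw [mem_cent] at hZ ⊢
  calc Q * X * P * (Q * Z * P) = Q * X * (P * Q) * Z * P := by simp only [Matrix.mul_assoc]
    _ = Q * Z * (P * Q) * X * P := by
        rw [h1, Matrix.mul_one, Matrix.mul_one, Matrix.mul_assoc Q X, hZ, Matrix.mul_assoc Q Z]
    _ = _ := by simp only [Matrix.mul_assoc]

/-! ### Block sums -/

theorem aeval_mul_eq {S : Matrix ι ι K} {X : Matrix κ κ K} {M : Matrix ι κ K}
    (h : S * M = M * X) (q : K[X]) : aeval S q * M = M * aeval X q := by
  induction q using Polynomial.induction_on' with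
  | add p q hp hq => simp [Matrix.add_mul, Matrix.mul_add, hp, hq]
  | monomial n a =>
    have : S ^ n * M = M * X ^ n := by
      induction n with
      | zero => simp
      | succ n ih =>
        rw [pow_succ, Matrix.mul_assoc, h, ← Matrix.mul_assoc, ih, Matrix.mul_assoc, ← pow_succ]
    simp [aeval_monomial, Algebra.algebraMap_eq_smul_one, this]

/-- A regular block sum: the two spectra are separated by the polynomial `q`. -/
theorem RegComm.fromBlocks {S A : Matrix ι ι K} {X B : Matrix κ κ K} (hS : RegComm S A)
    (hX : RegComm X B) (q : K[X]) (hq : aeval X q = 0) (hqS : IsUnit (aeval S q))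
    (R : Matrix ι κ K) (C : Matrix κ ι K) :
    RegComm (Matrix.fromBlocks S 0 0 X) (Matrix.fromBlocks A R C B) := by
  obtain ⟨u, hu⟩ := hqS
  have inj₁ : ∀ M : Matrix ι κ K, S * M = M * X → M = 0 := fun M h => by
    have := aeval_mul_eq h q
    rw [hq, Matrix.mul_zero, ← hu] at this
    calc M = ((↑u⁻¹ : Matrix ι ι K) * ↑u) * M := by simp
      _ = 0 := by rw [Matrix.mul_assoc, this, Matrix.mul_zero]
  have inj₂ : ∀ M : Matrix κ ι K, X * M = M * S → M = 0 := fun M h => by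
    have := aeval_mul_eq h q
    rw [hq, Matrix.zero_mul, ← hu] at this
    calc M = M * (↑u * (↑u⁻¹ : Matrix ι ι K)) := by simp
      _ = 0 := by rw [← Matrix.mul_assoc, ← this, Matrix.zero_mul]
  let f₁ : Matrix ι κ K →ₗ[K] Matrix ι κ K :=
    { toFun := fun M => S * M - M * X
      map_add' := fun M N => by simp only [Matrix.mul_add, Matrix.add_mul]; abel
      map_smul' := fun c M => by simp [smul_sub] }
  let f₂ : Matrix κ ι K →ₗ[K] Matrix κ ι K :=
    { toFun := fun M => X * M - M * S
      map_add' := fun M N => by simp only [Matrix.mul_add, Matrix.add_mul]; abel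
      map_smul' := fun c M => by simp [smul_sub] }
  obtain ⟨Y₁, h₁⟩ := (LinearMap.injective_iff_surjective (f := f₁)).1
    ((injective_iff_map_eq_zero f₁).2 fun M hM => inj₁ M (sub_eq_zero.1 hM)) R
  obtain ⟨Y₂, h₂⟩ := (LinearMap.injective_iff_surjective (f := f₂)).1
    ((injective_iff_map_eq_zero f₂).2 fun M hM => inj₂ M (sub_eq_zero.1 hM)) C
  change S * Y₁ - Y₁ * X = R at h₁
  change X * Y₂ - Y₂ * S = C at h₂
  obtain ⟨hS, YS, hYS⟩ := hS
  obtain ⟨hX, YX, hYX⟩ := hX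
  refine ⟨?_, Matrix.fromBlocks YS Y₁ Y₂ YX, ?_⟩
  · let g : (cent S × cent X) →ₗ[K] cent (Matrix.fromBlocks S 0 0 X) :=
      { toFun := fun Z => ⟨Matrix.fromBlocks Z.1 0 0 Z.2, by
          have h1 := mem_cent.1 Z.1.2
          have h2 := mem_cent.1 Z.2.2
          rw [mem_cent]
          simp [fromBlocks_multiply, h1, h2]⟩
        map_add' := fun Z W => Subtype.ext (by simp [fromBlocks_add])
        map_smul' := fun c Z => Subtype.ext (by simp [fromBlocks_smul]) }
    have hg : Function.Bijective g := by
      constructor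
      · rintro ⟨⟨Z, _⟩, W, _⟩ ⟨⟨Z', _⟩, W', _⟩ h
        have := congrArg Subtype.val h
        simpa [g, fromBlocks_inj] using this
      · rintro ⟨Z, hZ⟩
        rw [mem_cent, ← fromBlocks_toBlocks Z, fromBlocks_multiply, fromBlocks_multiply,
          fromBlocks_inj] at hZ
        simp only [Matrix.zero_mul, Matrix.mul_zero, add_zero, zero_add] at hZ
        obtain ⟨a, b, c, d⟩ := hZ
        refine ⟨⟨⟨Z.toBlocks₁₁, mem_cent.2 a⟩, Z.toBlocks₂₂, mem_cent.2 d⟩, Subtype.ext ?_⟩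
        change Matrix.fromBlocks Z.toBlocks₁₁ 0 0 Z.toBlocks₂₂ = Z
        conv_rhs => rw [← fromBlocks_toBlocks Z, inj₁ _ b, inj₂ _ c]
    rw [← (LinearEquiv.ofBijective g hg).finrank_eq, Module.finrank_prod, hS, hX,
      Fintype.card_sum]
  · rw [fromBlocks_multiply, fromBlocks_multiply, sub_eq_iff_eq_add,
      fromBlocks_add]
    simp [← hYS, ← hYX, ← h₁, ← h₂]

/-! ### Lower bidiagonal matrices -/

/-- The lower bidiagonal matrix with diagonal `d` and ones below the diagonal. -/
def bidiag {m : ℕ} (d : Fin m → K) : Matrix (Fin m) (Fin m) K :=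
  of fun i j => if i = j then d i else if (i : ℕ) = j + 1 then 1 else 0

theorem bidiag_apply {m : ℕ} (d : Fin m → K) (i j : Fin m) :
    bidiag d i j = if i = j then d i else if (i : ℕ) = j + 1 then 1 else 0 := rfl

theorem trace_bidiag {m : ℕ} (d : Fin m → K) : (bidiag d).trace = ∑ i, d i := by
  simp [trace, bidiag_apply]

theorem isCyclicRow_bidiag {m : ℕ} (d : Fin m → K) :
    IsCyclicRow (bidiag d) (fun i => if (i : ℕ) + 1 = m then 1 else 0) := by
  intro W hv hW
  have key : ∀ (r : ℕ) (i : Fin m), (i : ℕ) + r + 1 = m → Pi.single i (1 : K) ∈ W := by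
    intro r
    induction r with
    | zero =>
      intro i hi
      convert hv using 1
      ext j
      rw [Pi.single_apply]
      congr 1
      rw [Fin.ext_iff, eq_iff_iff]
      omega
    | succ r ih =>
      intro i hi
      let k : Fin m := ⟨i + 1, by omega⟩
      have hk := ih k (by simp only [k]; omega)
      have : Pi.single i (1 : K) = Pi.single k 1 ᵥ* bidiag d - d k • Pi.single k 1 := by
        ext j
        simp only [single_one_vecMul, Pi.sub_apply, row_apply, bidiag_apply, Pi.smul_apply,
          Pi.single_apply, smul_eq_mul, mul_ite, mul_one, mul_zero, Fin.ext_iff, k]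
        split_ifs <;> first | omega | simp
      rw [this]
      exact sub_mem (hW _ hk) (W.smul_mem _ hk)
  rw [eq_top_iff, ← (Pi.basisFun K (Fin m)).span_eq, Submodule.span_le]
  rintro _ ⟨i, rfl⟩
  rw [Pi.basisFun_apply]
  exact key (m - 1 - i) i (by omega)

theorem mul_bidiag_apply {m : ℕ} (d : Fin m → K) (M : Matrix (Fin m) (Fin m) K) (i j : Fin m) :
    (M * bidiag d) i j = M i j * d j + ∑ k : Fin m, if (k : ℕ) = j + 1 then M i k else 0 := by
  have : ∀ k, M i k * bidiag d k j =
      (if k = j then M i k * d k else 0) + (if (k : ℕ) = j + 1 then M i k else 0) := by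
    intro k
    rw [bidiag_apply]
    by_cases h : k = j
    · subst h; simp
    · simp [h]
  simp [mul_apply, this, Finset.sum_add_distrib]

/-- The matrices vanishing on and above the first subdiagonal. -/
def lowerTwo (K : Type*) [Field K] (m : ℕ) : Submodule K (Matrix (Fin m) (Fin m) K) where
  carrier := {Z | ∀ i j : Fin m, (i : ℕ) < j + 2 → Z i j = 0}
  add_mem' := fun ha hb i j h => by rw [Matrix.add_apply, ha i j h, hb i j h, add_zero]
  zero_mem' := fun _ _ _ => rfl
  smul_mem' := fun c a ha i j h => by rw [Matrix.smul_apply, ha i j h, smul_zero]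

theorem lowerTwo_mul_bidiag {m : ℕ} (d : Fin m → K) {Z : Matrix (Fin m) (Fin m) K}
    (hZ : Z ∈ lowerTwo K m) : Z * bidiag d ∈ lowerTwo K m := by
  intro i j h
  rw [mul_bidiag_apply, hZ i j h, zero_mul, zero_add]
  refine Finset.sum_eq_zero fun k _ => ?_
  split_ifs with hk
  · exact hZ i k (by omega)
  · rfl

/-- A diagonal alternating between `0` and `1`. -/
def IsAlternating {m : ℕ} (d : Fin m → K) : Prop :=
  (∀ i, d i * d i = d i) ∧ ∀ i j : Fin m, (i : ℕ) = j + 1 → d i + d j = 1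

theorem IsAlternating.sq_sub_mem {m : ℕ} {d : Fin m → K} (hd : IsAlternating d) :
    bidiag d * bidiag d - bidiag d ∈ lowerTwo K m := by
  intro i j h
  rw [Matrix.sub_apply, mul_bidiag_apply]
  by_cases hij : (i : ℕ) = j + 1
  · have hne : i ≠ j := by rintro rfl; omega
    have : ∀ k : Fin m, (if (k : ℕ) = j + 1 then bidiag d i k else 0) =
        if k = i then d i else 0 := by
      intro k
      by_cases hk : k = i
      · subst hk; simp [hij, bidiag_apply]
      · have : (k : ℕ) ≠ j + 1 := fun h' => hk (Fin.ext (by omega))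
        simp [hk, this]
    simp only [this, Finset.sum_ite_eq', Finset.mem_univ, if_true]
    rw [bidiag_apply, if_neg hne, if_pos hij]
    linear_combination hd.2 i j hij
  · rw [Finset.sum_eq_zero]
    · by_cases h' : i = j
      · subst h'; simp [bidiag_apply, hd.1]
      · simp [bidiag_apply, h', hij]
    · intro k _
      split_ifs with hk
      · have h1 : i ≠ k := by rintro rfl; omega
        have h2 : (i : ℕ) ≠ k + 1 := by omega
        simp [bidiag_apply, h1, h2]
      · rfl

/-- A matrix is lower Hessenberg if it vanishes above the first superdiagonal. -/
def IsHessenberg {m : ℕ} (B : Matrix (Fin m) (Fin m) K) : Prop :=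
  ∀ i j : Fin m, (i : ℕ) + 2 ≤ j → B i j = 0

theorem trace_lowerTwo_mul {m : ℕ} {Z B : Matrix (Fin m) (Fin m) K} (hZ : Z ∈ lowerTwo K m)
    (hB : IsHessenberg B) : (Z * B).trace = 0 := by
  refine Finset.sum_eq_zero fun i _ => ?_
  rw [diag_apply, mul_apply]
  refine Finset.sum_eq_zero fun j _ => ?_
  by_cases h : (i : ℕ) < j + 2
  · rw [hZ i j h, zero_mul]
  · rw [hB j i (by omega), mul_zero]

theorem IsAlternating.regComm {m : ℕ} {d : Fin m → K} (hd : IsAlternating d)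
    {B : Matrix (Fin m) (Fin m) K} (hB : IsHessenberg B) (h0 : B.trace = 0)
    (h1 : (bidiag d * B).trace = 0) : RegComm (bidiag d) B := by
  refine (isCyclicRow_bidiag d).regComm (Submodule.span K {1, bidiag d} ⊔ lowerTwo K m)
    (Submodule.mem_sup_left (Submodule.subset_span (by simp))) ?_ ?_
  · intro Z hZ
    obtain ⟨U, hU, L, hL, rfl⟩ := Submodule.mem_sup.1 hZ
    obtain ⟨a, b, rfl⟩ := Submodule.mem_span_pair.1 hU
    refine Submodule.mem_sup.2 ⟨(a + b) • bidiag d, ?_,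
      b • (bidiag d * bidiag d - bidiag d) + L * bidiag d,
      add_mem (Submodule.smul_mem _ _ hd.sq_sub_mem) (lowerTwo_mul_bidiag d hL), ?_⟩
    · exact Submodule.smul_mem _ _ (Submodule.subset_span (by simp))
    · simp only [add_smul, Matrix.add_mul, smul_mul_assoc, one_mul, smul_sub]
      abel
  · intro Z hZ
    obtain ⟨U, hU, L, hL, rfl⟩ := Submodule.mem_sup.1 hZ
    obtain ⟨a, b, rfl⟩ := Submodule.mem_span_pair.1 hU
    simp [Matrix.add_mul, trace_add, h0, h1, trace_lowerTwo_mul hL hB]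

theorem aeval_bidiag {m : ℕ} (d : Fin m → K) : aeval (bidiag d) (∏ i, (X - C (d i))) = 0 := by
  have ht : (bidiag d)ᵀ.BlockTriangular id := by
    intro i j hij
    have hij : j < i := hij
    have h1 : j ≠ i := hij.ne
    have h2 : (j : ℕ) ≠ i + 1 := by have := Fin.lt_def.1 hij; omega
    simp [transpose_apply, bidiag_apply, h1, h2]
  have := aeval_self_charpoly (bidiag d)
  rw [← charpoly_transpose, charpoly_of_isUpperTriangular _ ht] at this
  simpa [bidiag_apply] using this

/-! ### Hessenberg form -/

theorem exists_linearIndependent_hessenberg {V : Type*} [AddCommGroup V] [Module K V]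
    [FiniteDimensional K V] (f : V →ₗ[K] V) {v : V} (hv : LinearIndependent K ![v, f v]) (k : ℕ)
    (hk : k + 2 ≤ finrank K V) :
    ∃ e : Fin (k + 2) → V, LinearIndependent K e ∧ f (e 0) = e 1 ∧
      ∀ i : Fin (k + 2), (i : ℕ) + 1 < k + 2 →
        f (e i) ∈ Submodule.span K (e '' {l | (l : ℕ) ≤ i + 1}) := by
  induction k with
  | zero =>
    refine ⟨_, hv, rfl, fun i hi => ?_⟩
    obtain rfl : i = 0 := Fin.ext (by simp; omega)
    exact Submodule.subset_span ⟨1, by simp, rfl⟩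
  | succ k ih =>
    obtain ⟨e, he, he1, heH⟩ := ih (by omega)
    obtain ⟨w, hw, hfw⟩ : ∃ w, w ∉ Submodule.span K (Set.range e) ∧
        f (e (Fin.last _)) ∈ Submodule.span K (insert w (Set.range e)) := by
      by_cases h : f (e (Fin.last _)) ∈ Submodule.span K (Set.range e)
      · have hne : Submodule.span K (Set.range e) ≠ ⊤ := by
          intro h'
          have := finrank_span_eq_card he
          rw [h', finrank_top, Fintype.card_fin] at this
          omega
        obtain ⟨w, -, hw⟩ := SetLike.exists_of_lt (lt_top_iff_ne_top.2 hne)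
        exact ⟨w, hw, Submodule.span_mono (Set.subset_insert _ _) h⟩
      · exact ⟨_, h, Submodule.subset_span (Set.mem_insert _ _)⟩
    refine ⟨Fin.snoc e w, linearIndependent_finSnoc.2 ⟨he, hw⟩, ?_, ?_⟩
    · have h0 : (0 : Fin (k + 1 + 2)) = Fin.castSucc (0 : Fin (k + 2)) := rfl
      have h1 : (1 : Fin (k + 1 + 2)) = Fin.castSucc (1 : Fin (k + 2)) := by
        ext; simp
      rw [h0, h1]
      simpa only [Fin.snoc_castSucc] using he1
    · intro i hi
      obtain ⟨i, rfl⟩ : ∃ i' : Fin (k + 2), i = i'.castSucc := ⟨⟨i, by omega⟩, rfl⟩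
      simp only [Fin.snoc_castSucc, Fin.val_castSucc]
      by_cases h : (i : ℕ) + 1 < k + 2
      · refine Submodule.span_mono ?_ (heH i h)
        rintro _ ⟨l, hl, rfl⟩
        exact ⟨l.castSucc, by simpa using hl, by simp⟩
      · obtain rfl : i = Fin.last _ := Fin.ext (by simp; omega)
        refine Submodule.span_mono ?_ hfw
        rintro _ (rfl | ⟨l, rfl⟩)
        · exact ⟨Fin.last _, by simp, by simp⟩
        · exact ⟨l.castSucc, by simp, by simp⟩

theorem exists_hessenberg {m : ℕ} {B : Matrix (Fin (m + 2)) (Fin (m + 2)) K}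
    (hB : ¬ IsScalar B) :
    ∃ H : Matrix (Fin (m + 2)) (Fin (m + 2)) K, Sim B H ∧ IsHessenberg H ∧ H 0 1 ≠ 0 := by
  obtain ⟨v, hv⟩ : ∃ v, LinearIndependent K ![v, B.vecMulLinear v] := by
    by_contra! h
    obtain ⟨c, hc⟩ := LinearMap.exists_eq_smul_id_of_forall_notLinearIndependent h
    refine hB ⟨c, ?_⟩
    ext i j
    have := congrFun (LinearMap.congr_fun hc (Pi.single i 1)) j
    simpa [one_apply, Pi.single_apply, eq_comm] using this
  obtain ⟨e, he, he1, heH⟩ := exists_linearIndependent_hessenberg B.vecMulLinear hv m (by simp)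
  let b := basisOfLinearIndependentOfCardEqFinrank he (by simp)
  have hb : ⇑b = e := coe_basisOfLinearIndependentOfCardEqFinrank _ _
  let P : Matrix (Fin (m + 2)) (Fin (m + 2)) K := of e
  have hP : IsUnit P := linearIndependent_rows_iff_isUnit.1 he
  have hdet := (isUnit_iff_isUnit_det _).1 hP
  let H : Matrix (Fin (m + 2)) (Fin (m + 2)) K := of fun i j => b.repr (e i ᵥ* B) j
  have hPH : P * B = H * P := by
    ext i j
    have := congrFun (b.sum_repr (e i ᵥ* B)) j
    rw [Finset.sum_apply] at this
    simpa [mul_apply, P, H, hb, vecMul, dotProduct] using this.symm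
  refine ⟨H, ⟨P, P⁻¹, mul_nonsing_inv _ hdet, nonsing_inv_mul _ hdet, ?_⟩, ?_, ?_⟩
  · rw [hPH, Matrix.mul_assoc, mul_nonsing_inv _ hdet, Matrix.mul_one]
  · intro i j hij
    have := heH i (by omega)
    rw [← hb, Basis.mem_span_image] at this
    by_contra hne
    have hj := this (Finsupp.mem_support_iff.2 (by simpa [H, hb] using hne))
    simp only [Set.mem_ofPred_eq] at hj
    omega
  · have : e 0 ᵥ* B = b 1 := by rw [hb]; exact he1
    simp [H, this]

theorem trace_bidiag_mul {m : ℕ} (d : Fin m → K) (B : Matrix (Fin m) (Fin m) K) :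
    (bidiag d * B).trace = (∑ i, B i i * d i) +
      ∑ i : Fin m, ∑ k : Fin m, if (k : ℕ) = i + 1 then B i k else 0 := by
  rw [trace_mul_comm, trace]
  simp only [diag_apply, mul_bidiag_apply, Finset.sum_add_distrib]

theorem isScalar_of_subsingleton {ν : Type*} [DecidableEq ν] [Subsingleton ν]
    (A : Matrix ν ν K) : IsScalar A := by
  rcases isEmpty_or_nonempty ν with h | ⟨⟨i⟩⟩
  · exact ⟨0, Subsingleton.elim _ _⟩
  · refine ⟨A i i, ?_⟩
    ext j k
    rw [Subsingleton.elim j i, Subsingleton.elim k i]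
    simp

theorem IsAlternating.exists_hessenberg {m : ℕ} {d : Fin m → K} (hd : IsAlternating d)
    {B : Matrix (Fin m) (Fin m) K} (hB : ¬ IsScalar B) :
    ∃ H : Matrix (Fin m) (Fin m) K, Sim B H ∧ IsHessenberg H ∧ (bidiag d * H).trace = 0 := by
  match m, d, hd, B, hB with
  | 0, _, _, B, hB => exact absurd (isScalar_of_subsingleton B) hB
  | 1, _, _, B, hB => exact absurd (isScalar_of_subsingleton B) hB
  | m + 2, d, hd, B, hB =>
    obtain ⟨H, hBH, hH, h01⟩ := RegularCommutator.exists_hessenberg hB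
    have hsum : d 1 + d 0 = 1 := hd.2 1 0 rfl
    have hne : d 1 - d 0 ≠ 0 := by
      intro h
      have e : d 1 = d 0 := sub_eq_zero.1 h
      have h1 := hd.1 0
      rw [e] at hsum
      have : (1 : K) = 0 := by
        linear_combination (2 * d 0 + 1 - 2) * hsum - 4 * h1
      exact one_ne_zero this
    let t : K := -(bidiag d * H).trace / (H 0 1 * (d 1 - d 0))
    refine ⟨_, hBH.trans (sim_transvection H (k := 1) (i := 0) (by simp) t), ?_, ?_⟩
    · intro i j hij
      have hj : j ≠ 0 := by rintro rfl; simp at hij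
      simp only [of_apply, hj, if_false, sub_zero, hH i j hij, zero_add]
      split_ifs with h
      · rw [hH 0 j (by simp; omega), mul_zero]
      · rfl
    · rw [trace_bidiag_mul]
      have h2 : ∀ i k : Fin (m + 2), (if (k : ℕ) = i + 1 then (of fun p q => H p q +
          (if p = 1 then t * H 0 q else 0) - (if q = 0 then t * (H p 1 +
            (if p = 1 then t * H 0 1 else 0)) else 0) : Matrix _ _ K) i k else 0) =
          if (k : ℕ) = i + 1 then H i k else 0 := by
        intro i k
        split_ifs with h
        · have hk : k ≠ 0 := by rintro rfl; simp at h
          simp only [of_apply, hk, if_false, sub_zero, add_eq_left]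
          split_ifs with h'
          · subst h'
            rw [hH 0 k (by simp at h ⊢; omega), mul_zero]
          · rfl
        · rfl
      simp only [h2]
      have hT := trace_bidiag_mul d H
      have ht : t * (H 0 1 * (d 1 - d 0)) = -(bidiag d * H).trace :=
        div_mul_cancel₀ _ (mul_ne_zero h01 hne)
      rw [hT] at ht
      simp only [Fin.sum_univ_succ (n := m + 1)] at ht ⊢
      simp only [Fin.sum_univ_succ (n := m), Fin.succ_zero_eq_one] at ht ⊢
      have h3 : ∀ i : Fin m, i.succ.succ ≠ 1 := fun i h => by
        simpa using congrArg Fin.val h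
      simp [h3] at ht ⊢
      linear_combination ht

/-- A trace-zero matrix which is zero or nonscalar is a commutator of a regular matrix with
prescribed alternating eigenvalues. -/
theorem IsAlternating.exists_regComm {m : ℕ} {d : Fin m → K} (hd : IsAlternating d)
    {B : Matrix (Fin m) (Fin m) K} (hB : B = 0 ∨ ¬ IsScalar B) (htr : B.trace = 0) :
    ∃ Y, RegComm Y B ∧ Y.trace = ∑ i, d i ∧ aeval Y (∏ i, (X - C (d i))) = 0 := by
  obtain ⟨H, ⟨P, Q, h1, h2, rfl⟩, hH, hH1⟩ : ∃ H : Matrix (Fin m) (Fin m) K,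
      Sim B H ∧ IsHessenberg H ∧ (bidiag d * H).trace = 0 := by
    rcases hB with rfl | hB
    · exact ⟨0, Sim.refl _, fun _ _ _ => rfl, by simp⟩
    · exact hd.exists_hessenberg hB
  have hH0 : (P * B * Q).trace = 0 := by
    rw [trace_mul_comm, ← Matrix.mul_assoc, h2, Matrix.one_mul, htr]
  refine ⟨Q * bidiag d * P, (hd.regComm hH hH0 hH1).conj h1 h2, ?_, ?_⟩
  · rw [trace_mul_comm, ← Matrix.mul_assoc, h1, Matrix.one_mul, trace_bidiag]
  · have := aeval_mul_eq (S := Q * bidiag d * P) (X := bidiag d) (M := Q)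
      (by rw [Matrix.mul_assoc, h1, Matrix.mul_one]) (∏ i, (X - C (d i)))
    rw [aeval_bidiag, Matrix.mul_zero] at this
    calc _ = aeval (Q * bidiag d * P) (∏ i, (X - C (d i))) * (Q * P) := by
          rw [h2, Matrix.mul_one]
      _ = 0 := by rw [← Matrix.mul_assoc, this, Matrix.zero_mul]

/-! ### Zero diagonal -/

theorem Sim.extend {n : ℕ} {M : Matrix (Fin (n + 1)) (Fin (n + 1)) K} {B : Matrix (Fin n) (Fin n) K}
    (h : Sim (M.submatrix Fin.succ Fin.succ) B) :
    ∃ M' : Matrix (Fin (n + 1)) (Fin (n + 1)) K,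
      Sim M M' ∧ M' 0 0 = M 0 0 ∧ ∀ i j : Fin n, M' i.succ j.succ = B i j := by
  let e : Unit ⊕ Fin n ≃ Fin (n + 1) :=
    (Equiv.sumComm _ _).trans ((Equiv.optionEquivSumPUnit _).symm.trans (finSuccEquiv n).symm)
  have e0 : e.symm 0 = Sum.inl () := by rw [Equiv.symm_apply_eq]; simp [e]
  have es : ∀ i : Fin n, e.symm i.succ = Sum.inr i := fun i => by
    rw [Equiv.symm_apply_eq]; simp [e]
  have hM := Sim.submatrix M e
  have e1 : (M.submatrix e e).toBlocks₂₂ = M.submatrix Fin.succ Fin.succ := by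
    ext i j
    simp [toBlocks₂₂, e]
  rw [← fromBlocks_toBlocks (M.submatrix e e), e1] at hM
  obtain ⟨R, C, hRC⟩ := h.fromBlocks (M.submatrix e e).toBlocks₁₁ (M.submatrix e e).toBlocks₁₂
    (M.submatrix e e).toBlocks₂₁
  refine ⟨_, (hM.trans hRC).trans (Sim.submatrix _ e.symm), ?_, fun i j => ?_⟩
  · rw [submatrix_apply, e0]
    simp [toBlocks₁₁, e]
  · rw [submatrix_apply, es, es]
    simp

theorem exists_sim_corner_zero {n : ℕ} {A : Matrix (Fin (n + 1)) (Fin (n + 1)) K}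
    (hA : ¬ IsScalar A) (htr : A.trace = 0) :
    ∃ B : Matrix (Fin (n + 1)) (Fin (n + 1)) K, Sim A B ∧ B 0 0 = 0 ∧
      (B.submatrix Fin.succ Fin.succ = 0 ∨ ¬ IsScalar (B.submatrix Fin.succ Fin.succ)) := by
  obtain _ | n := n
  · exact absurd (isScalar_of_subsingleton (ν := Fin 1) A) hA
  obtain ⟨H, hAH, hH, h01⟩ := exists_hessenberg hA
  obtain ⟨B, hAB, h00, hB1, hB⟩ : ∃ B : Matrix (Fin (n + 2)) (Fin (n + 2)) K, Sim A B ∧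
      B 0 0 = 0 ∧ B 0 1 ≠ 0 ∧ ∀ j : Fin (n + 2), 2 ≤ (j : ℕ) → B 0 j = 0 := by
    refine ⟨_, hAH.trans (sim_transvection H (k := 1) (i := 0) (by simp) (H 0 0 / H 0 1)),
      ?_, ?_, fun j hj => ?_⟩
    · simp [h01]
    · simpa using h01
    · have : j ≠ 0 := by rintro rfl; simp at hj
      simp [this, hH 0 j (by simpa using hj)]
  by_cases hs : IsScalar (B.submatrix Fin.succ Fin.succ)
  swap
  · exact ⟨B, hAB, h00, Or.inr hs⟩
  obtain _ | n := n
  · refine ⟨B, hAB, h00, Or.inl ?_⟩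
    have := hAB.trace_eq
    rw [htr, trace, Fin.sum_univ_two, diag_apply, diag_apply, h00, zero_add] at this
    ext i j
    obtain rfl := Subsingleton.elim (α := Fin 1) i 0
    obtain rfl := Subsingleton.elim (α := Fin 1) j 0
    simpa using this
  · let k : Fin (n + 1 + 2) := Fin.succ 1
    have hk0 : k ≠ 0 := Fin.succ_ne_zero _
    have hk2 : 2 ≤ (k : ℕ) := by rw [Fin.val_succ, Fin.val_one]
    refine ⟨_, hAB.trans (sim_transvection B hk0 1), ?_, Or.inr ?_⟩
    · simp [h00, hB k hk2, hk0.symm]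
    · rintro ⟨c, hc⟩
      obtain ⟨c', hc'⟩ := hs
      have h1 := congrFun (congrFun hc 1) 0
      have h2 := congrFun (congrFun hc' 1) 0
      change B k 1 = _ at h2
      change B k 1 + (if k = k then 1 * B 0 1 else 0) - (if (1 : Fin (n + 1 + 2)) = 0 then _ else 0)
        = _ at h1
      simp [h2, hB1] at h1

theorem exists_sim_diag_zero {n : ℕ} {A : Matrix (Fin n) (Fin n) K} (hA : A = 0 ∨ ¬ IsScalar A)
    (htr : A.trace = 0) : ∃ B : Matrix (Fin n) (Fin n) K, Sim A B ∧ ∀ i, B i i = 0 := by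
  induction n with
  | zero => exact ⟨A, Sim.refl _, fun i => i.elim0⟩
  | succ n ih =>
    rcases hA with rfl | hA
    · exact ⟨0, Sim.refl _, fun _ => rfl⟩
    obtain ⟨B, hAB, h00, hB⟩ := exists_sim_corner_zero hA htr
    obtain ⟨D, hBD, hD⟩ := ih hB (by
      have := hAB.trace_eq
      rw [htr, trace, Fin.sum_univ_succ, diag_apply, h00, zero_add] at this
      exact this)
    obtain ⟨M, hM, hM0, hMs⟩ := hBD.extend
    refine ⟨M, hAB.trans hM, Fin.cases (by rw [hM0, h00]) fun i => ?_⟩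
    rw [hMs, hD]

theorem IsScalar.eq_zero {ν : Type*} [DecidableEq ν] {A : Matrix ν ν K} (hA : IsScalar A) (h0 : ∀ i, A i i = 0) : A = 0 := by
  obtain ⟨c, rfl⟩ := hA
  rcases isEmpty_or_nonempty ν with h | ⟨⟨i⟩⟩
  · exact Subsingleton.elim _ _
  · have : c = 0 := by simpa using h0 i
    rw [this, zero_smul]

/-- Among three indices, some pair of opposite entries can be made to vanish or not vanish
simultaneously, keeping a zero diagonal. -/
theorem exists_sim_balanced_pair {A : Matrix ι ι K} (h0 : ∀ i, A i i = 0) {x y z : ι}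
    (hxy : x ≠ y) (hxz : x ≠ z) (hyz : y ≠ z) :
    ∃ B : Matrix ι ι K, Sim A B ∧ (∀ i, B i i = 0) ∧
      ∃ i j, i ≠ j ∧ (B i j = 0 ↔ B j i = 0) := by
  by_cases h : ∃ i j, i ≠ j ∧ (A i j = 0 ↔ A j i = 0)
  · exact ⟨A, Sim.refl A, h0, h⟩
  push Not at h
  have key : ∀ k i j, k ≠ i → k ≠ j → i ≠ j → A k i ≠ 0 → A i j ≠ 0 →
      ∃ B : Matrix ι ι K, Sim A B ∧ (∀ i, B i i = 0) ∧
        ∃ i j, i ≠ j ∧ (B i j = 0 ↔ B j i = 0) := by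
    intro k i j hki hkj hij h1 h2
    have h1' : A i k = 0 := by have := h k i hki; tauto
    have h2' : A j i = 0 := by have := h i j hij; tauto
    have hdiag : ∀ t : K, ∀ p, (of fun p q => A p q + (if p = k then t * A i q else 0)
        - (if q = i then t * (A p k + (if p = k then t * A i k else 0)) else 0) :
          Matrix ι ι K) p p = 0 := by
      intro t p
      by_cases hp : p = k
      · subst hp; simp [h0, h1', hki]
      · by_cases hp' : p = i
        · subst hp'; simp [h0, h1']
        · simp [h0, hp, hp']
    by_cases h3 : A j k = 0
    · refine ⟨_, sim_transvection A hki (-(A k j) / A i j), hdiag _, k, j, hkj, ?_⟩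
      simp [hkj.symm, hki, hij.symm, h3, h2]
    · refine ⟨_, sim_transvection A hki 1, hdiag _, i, j, hij, ?_⟩
      simp [hki.symm, hij.symm, hkj.symm, h2, h2', h3]
  have a := h x y hxy
  have b := h x z hxz
  have c := h y z hyz
  by_cases h1 : A x y = 0 <;> by_cases h2 : A x z = 0 <;> by_cases h3 : A y z = 0
  · exact key z y x hyz.symm hxz.symm hxy.symm (by tauto) (by tauto)
  · exact key y z x hyz hxy.symm hxz.symm (by tauto) (by tauto)
  · exact key y x z hxy.symm hyz hxz (by tauto) (by tauto)
  · exact key y x z hxy.symm hyz hxz (by tauto) (by tauto)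
  · exact key z x y hxz.symm hyz.symm hxy (by tauto) (by tauto)
  · exact key x y z hxy hxz hyz (by tauto) (by tauto)
  · exact key x z y hxz hxy hyz.symm (by tauto) (by tauto)
  · exact key x y z hxy hxz hyz (by tauto) (by tauto)

/-! ### Alternating sequences -/

/-- The alternating sequence starting at the parity of `b`. -/
def altSeq (K : Type*) [Field K] (b i : ℕ) : K := if (i + b) % 2 = 0 then 0 else 1

theorem isAlternating_altSeq (b m : ℕ) : IsAlternating fun i : Fin m => altSeq K b i := by
  refine ⟨fun i => ?_, fun i j h => ?_⟩
  · simp only [altSeq]; split_ifs <;> simp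
  · simp only [altSeq, h]
    split_ifs <;> first | omega | simp

theorem sum_range_altSeq (b a : ℕ) : ∑ i ∈ Finset.range (2 * a), altSeq K b i = a := by
  induction a with
  | zero => simp
  | succ a ih =>
    rw [Nat.mul_succ, Finset.sum_range_succ, Finset.sum_range_succ, ih, add_assoc]
    push_cast
    congr 1
    simp only [altSeq]
    split_ifs <;> first | omega | simp

theorem sum_altSeq_even (b a : ℕ) : ∑ i : Fin (2 * a), altSeq K b i = a := by
  rw [Fin.sum_univ_eq_sum_range (altSeq K b), sum_range_altSeq]

theorem sum_altSeq_odd (b a : ℕ) : ∑ i : Fin (2 * a + 1), altSeq K b i = a + altSeq K b (2 * a) := by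
  rw [Fin.sum_univ_eq_sum_range (altSeq K b), Finset.sum_range_succ, sum_range_altSeq]

theorem altSeq_eq_zero_or_one (b i : ℕ) : altSeq K b i = 0 ∨ altSeq K b i = 1 := by
  unfold altSeq; split_ifs <;> simp

/-- In characteristic two the parity of the sum can be prescribed in odd length. -/
theorem exists_alternating_odd (h2 : (2 : K) = 0) (a : ℕ) {r : K} (hr : r = 0 ∨ r = 1) :
    ∃ d : Fin (2 * a + 1) → K, IsAlternating d ∧ ∑ i, d i = r ∧ ∀ i, d i = 0 ∨ d i = 1 := by
  have ha : (a : K) = 0 ∨ (a : K) = 1 := by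
    rcases Nat.even_or_odd' a with ⟨c, rfl | rfl⟩ <;> simp [h2]
  have e0 : altSeq K 0 (2 * a) = 0 := by simp [altSeq]
  have e1 : altSeq K 1 (2 * a) = 1 := by simp [altSeq, Nat.add_mod]
  have h11 : (1 : K) + 1 = 0 := by rw [one_add_one_eq_two, h2]
  by_cases h : (a : K) = r
  · exact ⟨_, isAlternating_altSeq 0 _, by rw [sum_altSeq_odd, e0, add_zero, h],
      fun i => altSeq_eq_zero_or_one _ _⟩
  · refine ⟨_, isAlternating_altSeq 1 _, ?_, fun i => altSeq_eq_zero_or_one _ _⟩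
    rw [sum_altSeq_odd, e1]
    rcases ha with ha | ha <;> rcases hr with hr | hr <;> simp_all

/-! ### Splitting off a small block -/

theorem isUnit_aeval_prod {S : Matrix ι ι K} {m : ℕ} {d : Fin m → K}
    (h : ∀ i, IsUnit (S - d i • (1 : Matrix ι ι K)).det) : IsUnit (aeval S (∏ i, (X - C (d i)))) := by
  refine Finset.prod_induction (fun i => (X - C (d i) : K[X])) (fun q => IsUnit (aeval S q))
    (fun a b ha hb => by rw [map_mul]; exact ha.mul hb) (by simp) fun i _ => ?_
  rw [isUnit_iff_isUnit_det]
  simpa [Algebra.algebraMap_eq_smul_one] using h i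

theorem exists_equiv_extending {ν : Type*} [Fintype ν] {n m : ℕ} {e : ν → Fin n} (he : Function.Injective e)
    (hm : Fintype.card ν + m = n) : ∃ E : ν ⊕ Fin m ≃ Fin n, ∀ i, E (Sum.inl i) = e i := by
  classical
  have hc : Fintype.card ((Set.range e)ᶜ : Set (Fin n)) = m := by
    rw [Fintype.card_compl_set, Set.card_range_of_injective he, Fintype.card_fin]
    omega
  exact ⟨(Equiv.sumCongr (Equiv.ofInjective e he) (Fintype.equivFinOfCardEq hc).symm).trans
    (Equiv.Set.sumCompl (Set.range e)), fun i => by simp⟩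

theorem trace_fromBlocks_zero {μ ν : Type*} [Fintype μ] [Fintype ν] (S : Matrix μ μ K)
    (Y : Matrix ν ν K) :
    (fromBlocks S 0 0 Y).trace = S.trace + Y.trace := by
  simp [trace, Fintype.sum_sum_type]

theorem good_of_block {n m : ℕ} {A : Matrix (Fin n) (Fin n) K} (h0 : ∀ i, A i i = 0)
    {e : κ → Fin n} (he : Function.Injective e) (hm : Fintype.card κ + m = n)
    (hκ : (Fintype.card κ : K) ≠ 0) {d : Fin m → K} (hd : IsAlternating d) {S : Matrix κ κ K}
    (hS : RegComm S (A.submatrix e e)) (htr : S.trace + ∑ i, d i = 0)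
    (hu : ∀ i, (S - d i • (1 : Matrix κ κ K)).det ≠ 0) : Good A := by
  obtain ⟨E, hE⟩ := exists_equiv_extending he hm
  refine Good.of_sim (Sim.submatrix A E) ?_
  rw [← fromBlocks_toBlocks (A.submatrix E E)]
  have e1 : (A.submatrix E E).toBlocks₁₁ = A.submatrix e e := by
    ext i j; simp [toBlocks₁₁, hE]
  have hB0 : ∀ i, (A.submatrix E E).toBlocks₂₂ i i = 0 := fun i => by simp [toBlocks₂₂, h0]
  obtain ⟨Y, hY, hYt, hYq⟩ := hd.exists_regComm (B := (A.submatrix E E).toBlocks₂₂)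
    (or_iff_not_imp_left.2 fun hne hs => hne (hs.eq_zero hB0))
    (Finset.sum_eq_zero fun i _ => hB0 i)
  rw [e1]
  refine ⟨fromBlocks S 0 0 Y, hS.fromBlocks hY _ hYq
    (isUnit_aeval_prod fun i => (hu i).isUnit) _ _, ?_, fromBlocks 1 0 0 0, ?_, ?_⟩
  · rw [trace_fromBlocks_zero, hYt, htr]
  · simp [mem_cent, fromBlocks_multiply]
  · simpa [trace_fromBlocks_zero] using hκ

theorem regComm_fin_one (c : K) {A : Matrix (Fin 1) (Fin 1) K} (hA : A = 0) :
    RegComm (bidiag fun _ : Fin 1 => c) A :=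
  ⟨(isCyclicRow_bidiag _).finrank_cent, 0, by simp [hA]⟩

theorem sq_fin_two (s t c : K) :
    !![0, s; t, c] * !![0, s; t, c] = (s * t) • (1 : Matrix (Fin 2) (Fin 2) K) +
      c • !![0, s; t, c] := by
  ext i j
  fin_cases i <;> fin_cases j <;> simp [mul_apply, Fin.sum_univ_two] <;> ring

theorem regComm_fin_two {s t : K} (c : K) (hs : s ≠ 0) {A : Matrix (Fin 2) (Fin 2) K}
    (h0 : ∀ i, A i i = 0) (h : s * A 1 0 + t * A 0 1 = 0) : RegComm !![0, s; t, c] A := by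
  have hcyc : IsCyclicRow !![0, s; t, c] ![1, 0] := by
    intro W h1 hW
    have h2 := hW _ h1
    rw [eq_top_iff]
    intro w _
    have : w = w 0 • ![1, 0] + (w 1 / s) • (![1, 0] ᵥ* !![0, s; t, c]) := by
      ext i
      fin_cases i <;> simp [hs]
    rw [this]
    exact add_mem (W.smul_mem _ h1) (W.smul_mem _ h2)
  refine hcyc.regComm (Submodule.span K {1, !![0, s; t, c]}) (Submodule.subset_span (by simp)) ?_ ?_
  · intro Z hZ
    obtain ⟨a, b, rfl⟩ := Submodule.mem_span_pair.1 hZ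
    refine Submodule.mem_span_pair.2 ⟨b * (s * t), a + b * c, ?_⟩
    rw [Matrix.add_mul, smul_mul_assoc, smul_mul_assoc, one_mul, sq_fin_two]
    module
  · intro Z hZ
    obtain ⟨a, b, rfl⟩ := Submodule.mem_span_pair.1 hZ
    rw [Matrix.add_mul, smul_mul_assoc, smul_mul_assoc, one_mul, trace_add, trace_smul, trace_smul]
    simp only [trace_fin_two, mul_apply, Fin.sum_univ_two, h0, smul_eq_mul]
    simp only [of_apply, cons_val', cons_val_zero, cons_val_one, cons_val_fin_one]
    linear_combination b * h

theorem good_of_odd {n : ℕ} (hn : (n : K) = 0) (hodd : Odd n) {A : Matrix (Fin n) (Fin n) K}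
    (h0 : ∀ i, A i i = 0) : Good A := by
  obtain ⟨a, rfl⟩ := hodd
  push_cast at hn
  have h2 : (2 : K) ≠ 0 := fun h => by simp [h] at hn
  have ha : (a : K) = -(1 / 2) := by field_simp; linear_combination hn
  have hf : Function.Injective fun _ : Fin 1 => (0 : Fin (2 * a + 1)) :=
    Function.injective_of_subsingleton _
  refine good_of_block h0 hf (m := 2 * a) (by simp; omega) (by simp)
    (isAlternating_altSeq 0 _) (S := bidiag fun _ => 1 / 2) (regComm_fin_one _ ?_) ?_ ?_
  · ext i j
    simp [h0]
  · rw [sum_altSeq_even, trace_bidiag, ha]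
    simp
  · intro i
    have h12 : (1 / 2 : K) - 1 ≠ 0 := by
      intro h
      have : (1 : K) = 0 := by field_simp at h; linear_combination -h
      exact one_ne_zero this
    rcases altSeq_eq_zero_or_one (K := K) 0 i with h | h
    · simpa [h, bidiag_apply] using h2
    · simpa [h, bidiag_apply] using h12

theorem good_of_even {n : ℕ} (hn : (n : K) = 0) (heven : Even n) (h2 : (2 : K) ≠ 0)
    {A : Matrix (Fin n) (Fin n) K} (h0 : ∀ i, A i i = 0) {i j : Fin n} (hij : i ≠ j)
    (hA : A i j = 0 ↔ A j i = 0) : Good A := by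
  obtain ⟨a, ha⟩ : ∃ a, n = 2 * a + 2 := by
    obtain ⟨b, rfl⟩ := heven
    have := i.2
    exact ⟨b - 1, by omega⟩
  have haK : (a : K) = -1 := by
    rw [ha] at hn
    push_cast at hn
    have : (2 : K) * (a + 1) = 0 := by linear_combination hn
    have := (mul_eq_zero.1 this).resolve_left h2
    linear_combination this
  obtain ⟨s, t, hs, ht, hst⟩ : ∃ s t : K, s ≠ 0 ∧ t ≠ 0 ∧ s * A j i + t * A i j = 0 := by
    by_cases h : A i j = 0
    · exact ⟨1, 1, one_ne_zero, one_ne_zero, by simp [h, hA.1 h]⟩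
    · exact ⟨A i j, -A j i, h, neg_ne_zero.2 fun h' => h (hA.2 h'), by ring⟩
  have hf : Function.Injective ![i, j] := by
    intro x y
    fin_cases x <;> fin_cases y <;> simp [hij, hij.symm]
  refine good_of_block h0 hf (m := 2 * a) (by simp; omega) (by simpa using h2)
    (isAlternating_altSeq 0 _) (S := !![0, s; t, 1])
    (regComm_fin_two 1 hs (fun _ => by simp [h0]) (by simpa using hst)) ?_ ?_
  · rw [sum_altSeq_even, haK, trace_fin_two]
    simp
  · intro l
    rcases altSeq_eq_zero_or_one (K := K) 0 l with h | h <;>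
      simp [h, det_fin_two, hs, ht]

theorem good_of_char_two {n m : ℕ} (h2 : (2 : K) = 0) (hn : 3 + m = n)
    {A : Matrix (Fin n) (Fin n) K} (h0 : ∀ i, A i i = 0) {i j l : Fin n} (hij : i ≠ j)
    (hli : l ≠ i) (hlj : l ≠ j) {c s t : K} (hc : c ≠ 0) (hs : s ≠ 0) (ht : t ≠ 0)
    (hst : s * A j i + t * A i j = 0) {d : Fin m → K} (hd : IsAlternating d)
    (hsum : ∑ r, d r = 0) (hu : ∀ r, d r = 0 ∨ d r = 1 ∧ c ≠ 1 ∧ s * t ≠ 1 + c) : Good A := by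
  have hf : Function.Injective (Sum.elim (fun _ : Fin 1 => l) ![i, j]) := by
    rintro (x | x) (y | y) <;> fin_cases x <;> fin_cases y <;>
      simp [hij, hij.symm, hli, hlj, hli.symm, hlj.symm]
  have h3 : (3 : K) ≠ 0 := by
    have : (3 : K) = 1 := by linear_combination h2
    rw [this]; exact one_ne_zero
  refine good_of_block h0 hf (m := m) (by simpa using hn)
    (by simpa [show (1 : K) + 2 = 3 by norm_num] using h3) hd
    (S := fromBlocks (bidiag fun _ : Fin 1 => c) 0 0 !![0, s; t, c]) ?_ ?_ ?_
  · rw [← fromBlocks_toBlocks (A.submatrix _ _)]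
    refine RegComm.fromBlocks (regComm_fin_one c ?_) (regComm_fin_two c hs (fun _ => ?_) ?_)
      (X ^ 2 - C c * X - C (s * t)) ?_ ?_ _ _
    · ext x y
      simp [toBlocks₁₁, h0]
    · simp [toBlocks₂₂, h0]
    · simpa [toBlocks₂₂] using hst
    · simp only [map_sub, map_mul, aeval_X, aeval_C, Algebra.algebraMap_eq_smul_one,
        sq, sq_fin_two, smul_mul_assoc, one_mul]
      module
    · rw [isUnit_iff_isUnit_det]
      simp [Algebra.algebraMap_eq_smul_one, bidiag_apply, sq, mul_apply, hs, ht]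
  · rw [trace_fromBlocks_zero, trace_bidiag, hsum, trace_fin_two]
    simp
    linear_combination c * h2
  · intro r
    have e : fromBlocks (bidiag fun _ : Fin 1 => c) 0 0 !![0, s; t, c] -
        d r • (1 : Matrix (Fin 1 ⊕ Fin 2) (Fin 1 ⊕ Fin 2) K) =
        fromBlocks (bidiag fun _ : Fin 1 => c - d r) 0 0 !![-d r, s; t, c - d r] := by
      ext (x | x) (y | y) <;> fin_cases x <;> fin_cases y <;> simp [bidiag_apply]
    rw [e, det_fromBlocks_zero₁₂, det_fin_two]
    rcases hu r with h | ⟨h, hc1, hst1⟩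
    · simp [h, bidiag_apply, hc, hs, ht]
    · refine mul_ne_zero (by simpa [h, bidiag_apply] using sub_ne_zero.2 hc1) fun h' => hst1 ?_
      simp [h] at h'
      linear_combination -h' - c * h2

theorem good_of_triangle {n m : ℕ} (h2 : (2 : K) = 0) (hn : 3 + m = n)
    {A : Matrix (Fin n) (Fin n) K} (h0 : ∀ i, A i i = 0) {e : Fin 3 → Fin n}
    (he : Function.Injective e) {r : K} (h01 : A (e 0) (e 1) + A (e 1) (e 0) = r)
    (h12 : A (e 1) (e 2) + A (e 2) (e 1) = r) (h02 : A (e 0) (e 2) + A (e 2) (e 0) = r)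
    {d : Fin m → K} (hd : IsAlternating d) (hsum : ∑ r, d r = 1)
    (hu : ∀ r, d r = 0 ∨ d r = 1) : Good A := by
  have h3 : (3 : K) ≠ 0 := by
    have : (3 : K) = 1 := by linear_combination h2
    rw [this]; exact one_ne_zero
  let S : Matrix (Fin 3) (Fin 3) K := !![0, 1, 0; 1, 0, 1; 0, 1, 1]
  let T : Matrix (Fin 3) (Fin 3) K := !![1, 0, 1; 0, 2, 1; 1, 1, 2]
  have hSS : S * S = T := by
    ext i j
    fin_cases i <;> fin_cases j <;> simp [S, T, mul_apply, Fin.sum_univ_three, one_add_one_eq_two]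
  have hTS : T * S = 1 + T := by
    ext i j
    fin_cases i <;> fin_cases j <;> simp [S, T, mul_apply, Fin.sum_univ_three, h2, one_add_one_eq_two]
  have hcyc : IsCyclicRow S ![1, 0, 0] := by
    intro W h1 hW
    have h2 := hW _ h1
    have h3 := hW _ h2
    rw [eq_top_iff]
    intro w _
    have : w = (w 0 - w 2) • ![1, 0, 0] + w 1 • (![1, 0, 0] ᵥ* S) +
        w 2 • ((![1, 0, 0] ᵥ* S) ᵥ* S) := by
      ext i
      fin_cases i <;> simp [S]
    rw [this]
    exact add_mem (add_mem (W.smul_mem _ h1) (W.smul_mem _ h2)) (W.smul_mem _ h3)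
  refine good_of_block h0 he (m := m) (by simpa using hn) (by simpa using h3) hd (S := S) ?_ ?_ ?_
  · refine hcyc.regComm (Submodule.span K {1, S, T}) (Submodule.subset_span (by simp)) ?_ ?_
    · intro Z hZ
      obtain ⟨a, b, c, rfl⟩ := Submodule.mem_span_triple.1 hZ
      refine Submodule.mem_span_triple.2 ⟨c, a, b + c, ?_⟩
      simp only [Matrix.add_mul, smul_mul_assoc, one_mul, hSS, hTS]
      module
    · intro Z hZ
      obtain ⟨a, b, c, rfl⟩ := Submodule.mem_span_triple.1 hZ
      simp only [Matrix.add_mul, smul_mul_assoc, one_mul, trace_add, trace_smul,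
        trace_fin_three, mul_apply, Fin.sum_univ_three]
      simp [S, T, h0]
      linear_combination b * (h01 + h12) + c * (h02 + h12) + (b + c) * r * h2
  · rw [hsum, trace_fin_three]
    simp [S]
    linear_combination h2
  · intro l
    rcases hu l with h | h <;> simp [S, h, det_fin_three]

/-! ### Assembling the nonscalar case -/

theorem good_of_card_ne_zero {n : ℕ} (hn : (n : K) ≠ 0) {A : Matrix (Fin n) (Fin n) K}
    (hA : ¬ IsScalar A) (htr : A.trace = 0) : Good A := by
  obtain ⟨Y, ⟨hY, W, hW⟩, -⟩ := (isAlternating_altSeq (K := K) 0 n).exists_regComm (Or.inr hA) htr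
  have hcent : cent (Y - (Y.trace / n) • (1 : Matrix (Fin n) (Fin n) K)) = cent Y := by
    ext Z
    simp [mem_cent, Matrix.sub_mul, Matrix.mul_sub]
  refine ⟨Y - (Y.trace / n) • (1 : Matrix (Fin n) (Fin n) K), ⟨by rw [hcent, hY], W, ?_⟩, ?_,
    1, by simp [mem_cent], by simpa using hn⟩
  · rw [← hW, Matrix.sub_mul, Matrix.mul_sub]
    simp
  · simp [trace_sub, hn]

/-- A two-colouring of the ordered pairs from at least six points has a monochromatic triangle. -/
theorem exists_triangle {n : ℕ} (hn : 6 ≤ n) (f : Fin n → Fin n → K)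
    (hf : ∀ i j, f i j = 0 ∨ f i j = 1) :
    ∃ e : Fin 3 → Fin n, Function.Injective e ∧ ∃ r, f (e 0) (e 1) = r ∧ f (e 1) (e 2) = r ∧
      f (e 0) (e 2) = r := by
  classical
  have pigeonhole : ∀ g : Fin 5 → Bool, ∃ x y z, x < y ∧ y < z ∧ g x = g y ∧ g y = g z := by
    decide
  have hinj : ∀ a b c : Fin n, a < b → b < c → Function.Injective ![a, b, c] := by
    intro a b c h1 h2 x y
    have h3 := h1.trans h2
    fin_cases x <;> fin_cases y <;> simp [h1.ne, h2.ne, h3.ne, h1.ne', h2.ne', h3.ne']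
  let o : Fin n := ⟨0, by omega⟩
  let v : Fin 5 → Fin n := fun x => ⟨x + 1, by omega⟩
  obtain ⟨x, y, z, hxy, hyz, h1, h2⟩ := pigeonhole fun x => decide (f o (v x) = 0)
  have hv : ∀ {p q}, p < q → v p < v q := fun {p q} h => by
    simp only [v, Fin.lt_def] at h ⊢; omega
  have ho : ∀ p, o < v p := fun p => by simp [o, v, Fin.lt_def]
  have heq : ∀ p q, decide (f o (v p) = 0) = decide (f o (v q) = 0) → f o (v p) = f o (v q) := by
    intro p q h
    rw [decide_eq_decide] at h
    rcases hf o (v p) with hp | hp <;> rcases hf o (v q) with hq | hq <;> simp_all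
  have e1 := heq x y h1
  have e2 := heq y z h2
  by_cases c1 : f (v x) (v y) = f o (v x)
  · exact ⟨_, hinj _ _ _ (ho x) (hv hxy), f o (v x), rfl, c1, e1.symm⟩
  by_cases c2 : f (v y) (v z) = f o (v x)
  · exact ⟨_, hinj _ _ _ (ho y) (hv hyz), f o (v x), e1.symm, c2, (e1.trans e2).symm⟩
  by_cases c3 : f (v x) (v z) = f o (v x)
  · exact ⟨_, hinj _ _ _ (ho x) (hv (hxy.trans hyz)), f o (v x), rfl, c3, (e1.trans e2).symm⟩
  have hne : ∀ p q, f p q ≠ f o (v x) → f p q = 1 - f o (v x) := by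
    intro p q h
    rcases hf p q with h1 | h1 <;> rcases hf o (v x) with h2 | h2 <;> simp [h1, h2] at h ⊢
  exact ⟨_, hinj _ _ _ (hv hxy) (hv hyz), 1 - f o (v x), hne _ _ c1, hne _ _ c2, hne _ _ c3⟩

theorem exists_scaling (h2 : (2 : K) = 0) {c x y : K} (hc0 : c ≠ 0) (hc1 : c ≠ 1)
    (hxy : x = 0 ↔ y = 0) :
    ∃ s t : K, s ≠ 0 ∧ t ≠ 0 ∧ s * y + t * x = 0 ∧ s * t ≠ 1 + c := by
  by_cases hx : x = 0
  · exact ⟨1, 1, one_ne_zero, one_ne_zero, by simp [hx, hxy.1 hx], by simpa using hc0⟩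
  have hy : y ≠ 0 := fun h => hx (hxy.2 h)
  have scale : ∀ s : K, s ≠ 0 → s * (s * (y / x)) ≠ 1 + c →
      ∃ s t : K, s ≠ 0 ∧ t ≠ 0 ∧ s * y + t * x = 0 ∧ s * t ≠ 1 + c := fun s hs h =>
    ⟨s, s * (y / x), hs, mul_ne_zero hs (div_ne_zero hy hx), by
      field_simp
      linear_combination s * y * h2, h⟩
  by_cases h : y / x = 1 + c
  · refine scale c hc0 fun h' => ?_
    rw [h] at h'
    have hz : (c - 1) * ((c - 1) * (c - 1)) = 0 := by
      linear_combination h' + (2 * c - 2 * c ^ 2) * h2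
    have : c - 1 = 0 := by simpa using hz
    exact hc1 (sub_eq_zero.1 this)
  · exact scale 1 one_ne_zero (by simpa using h)

theorem good_of_not_isScalar {n : ℕ} (hn : 3 ≤ n) {A : Matrix (Fin n) (Fin n) K}
    (hA : ¬ IsScalar A) (htr : A.trace = 0) : Good A := by
  by_cases hnK : (n : K) = 0
  swap
  · exact good_of_card_ne_zero hnK hA htr
  obtain ⟨D, hAD, hD⟩ := exists_sim_diag_zero (Or.inr hA) htr
  rcases Nat.even_or_odd n with heven | hodd
  swap
  · exact Good.of_sim hAD (good_of_odd hnK hodd hD)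
  obtain ⟨B, hDB, hB, i, j, hij, hBij⟩ := exists_sim_balanced_pair hD
    (x := ⟨0, by omega⟩) (y := ⟨1, by omega⟩) (z := ⟨2, by omega⟩) (by simp) (by simp) (by simp)
  refine Good.of_sim (hAD.trans hDB) ?_
  by_cases h2 : (2 : K) = 0
  swap
  · exact good_of_even hnK heven h2 hB hij hBij
  obtain ⟨a, ha⟩ : ∃ a, 3 + (2 * a + 1) = n := by
    obtain ⟨b, rfl⟩ := heven
    exact ⟨b - 2, by omega⟩
  obtain ⟨l, hli, hlj⟩ := Fin.exists_ne_and_ne_of_two_lt i j (by omega)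
  by_cases hK : ∃ c : K, c ≠ 0 ∧ c ≠ 1
  · obtain ⟨c, hc0, hc1⟩ := hK
    obtain ⟨d, hd, hsum, hd01⟩ := exists_alternating_odd h2 a (r := 0) (Or.inl rfl)
    obtain ⟨s, t, hs, ht, hst, hst1⟩ := exists_scaling h2 hc0 hc1 hBij
    exact good_of_char_two h2 ha hB hij hli hlj hc0 hs ht hst hd hsum
      fun r => (hd01 r).imp_right fun h => ⟨h, hc1, hst1⟩
  have hK : ∀ c : K, c = 0 ∨ c = 1 := fun c => by
    by_contra h
    exact hK ⟨c, not_or.1 h⟩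
  obtain _ | a := a
  · have hone : (1 : K) + 1 = 0 := by rw [one_add_one_eq_two, h2]
    refine good_of_char_two h2 ha hB hij hli hlj one_ne_zero one_ne_zero one_ne_zero ?_
      (isAlternating_altSeq 0 _) (by simp [altSeq]) fun r => Or.inl ?_
    · rcases hK (B i j) with h | h <;> rcases hK (B j i) with h' | h' <;> simp_all
    · obtain rfl := Subsingleton.elim (α := Fin 1) r 0
      simp [altSeq]
  · obtain ⟨d, hd, hsum, hd01⟩ := exists_alternating_odd h2 (a + 1) (r := 1) (Or.inr rfl)
    obtain ⟨e, he, r, h01, h12, h02⟩ := exists_triangle (by omega) (fun p q => B p q + B q p)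
      (fun p q => hK _)
    exact good_of_triangle h2 ha hB he h01 h12 h02 hd hsum hd01

/-! ### The scalar case -/

theorem shift_commutator {n : ℕ} {c : K} (hc : (n : K) * c = 0) :
    bidiag (fun _ : Fin n => (0 : K)) *
        (of fun i j : Fin n => if (j : ℕ) = i + 1 then -((j : ℕ) * c) else 0) -
      (of fun i j : Fin n => if (j : ℕ) = i + 1 then -((j : ℕ) * c) else 0) *
        bidiag (fun _ : Fin n => (0 : K)) = c • (1 : Matrix (Fin n) (Fin n) K) := by
  ext i j
  rw [Matrix.sub_apply, mul_bidiag_apply, mul_apply, Matrix.smul_apply, one_apply]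
  simp only [of_apply, bidiag_apply, mul_zero, zero_add]
  by_cases hij : i = j
  · subst hij
    have h1 : (∑ k : Fin n, (if i = k then (0 : K) else if (i : ℕ) = k + 1 then 1 else 0) *
        if (i : ℕ) = k + 1 then -((i : ℕ) * c) else 0) = -((i : ℕ) * c) := by
      by_cases hi : (i : ℕ) = 0
      · rw [Finset.sum_eq_zero]
        · simp [hi]
        · intro k _
          simp [hi]
      · rw [Finset.sum_eq_single ⟨i - 1, by omega⟩]
        · have e1 : (i : ℕ) = i - 1 + 1 := by omega
          have e2 : i ≠ ⟨i - 1, by omega⟩ := fun h => by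
            have := congrArg Fin.val h
            simp only at this
            omega
          simp [← e1, e2]
        · intro k _ hk
          have : (i : ℕ) ≠ k + 1 := fun h => hk (Fin.ext (by simp only; omega))
          simp [this]
        · simp
    have h2 : (∑ k : Fin n, if (k : ℕ) = i + 1 then
        (if (k : ℕ) = i + 1 then -((k : ℕ) * c) else 0) else 0) = -((i + 1 : ℕ) * c) := by
      by_cases hi : (i : ℕ) + 1 = n
      · rw [Finset.sum_eq_zero, hi, hc, neg_zero]
        intro k _
        have : (k : ℕ) ≠ i + 1 := by omega
        simp [this]
      · rw [Finset.sum_eq_single ⟨i + 1, by omega⟩]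
        · simp
        · intro k _ hk
          have : (k : ℕ) ≠ i + 1 := fun h => hk (Fin.ext h)
          simp [this]
        · simp
    rw [h1, h2]
    push_cast
    simp
    ring
  · rw [Finset.sum_eq_zero, Finset.sum_eq_zero]
    · simp [hij]
    · intro k _
      split_ifs with h1 h2
      · exact absurd (Fin.ext (by omega)) hij
      · rfl
      · rfl
    · intro k _
      split_ifs with h1 h2 h3 h3
      all_goals first | exact absurd (Fin.ext (by omega)) hij | simp

/-! ### Trace-zero centralizers -/

theorem glCent_eq_cent {n : ℕ} (X : Matrix (Fin n) (Fin n) K) : glCent X = cent X := by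
  ext Z
  rw [mem_cent]
  rfl

theorem finrank_slCent {n : ℕ} {X Z : Matrix (Fin n) (Fin n) K}
    (hX : finrank K (cent X) = n) (hZ : Z ∈ cent X) (hZt : Z.trace ≠ 0) :
    finrank K (slCent X) = n - 1 := by
  let f : cent X →ₗ[K] K := (traceLinearMap (Fin n) K K).comp (cent X).subtype
  have hf : f ≠ 0 := fun h => hZt (LinearMap.congr_fun h ⟨Z, hZ⟩)
  have hsl : slCent X = (LinearMap.ker f).map (cent X).subtype := by
    ext W
    constructor
    · rintro ⟨h1, h2⟩
      exact ⟨⟨W, mem_cent.2 h2⟩, h1, rfl⟩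
    · rintro ⟨⟨W, hW⟩, h1, rfl⟩
      exact ⟨h1, mem_cent.1 hW⟩
  have hsurj : LinearMap.range f = ⊤ := LinearMap.range_eq_top.2 (LinearMap.surjective hf)
  have := f.finrank_range_add_finrank_ker
  rw [hsurj, finrank_top, finrank_self, hX] at this
  rw [hsl, Submodule.finrank_map_subtype_eq]
  omega

end RegularCommutator

/-- Every trace-zero matrix over a field is a commutator of trace-zero matrices (for `n ≥ 3`).
Moreover `X` can be chosen `gl_n(K)`-regular when `A` is scalar, and `sl_n(K)`-regular when
`A` is non-scalar. -/
theorem trace_zero_is_commutator_field {K : Type*} [Field K] {n : ℕ} (hn : 3 ≤ n)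
    (A : Matrix (Fin n) (Fin n) K) (hA : A.trace = 0) :
    ∃ X Y : Matrix (Fin n) (Fin n) K,
      X.trace = 0 ∧ Y.trace = 0 ∧ X * Y - Y * X = A ∧
      ((∃ c : K, A = c • (1 : Matrix (Fin n) (Fin n) K)) →
        Module.finrank K (glCent X) = n) ∧
      (¬ (∃ c : K, A = c • (1 : Matrix (Fin n) (Fin n) K)) →
        Module.finrank K (slCent X) = n - 1) := by
  by_cases hs : ∃ c : K, A = c • (1 : Matrix (Fin n) (Fin n) K)
  · obtain ⟨c, rfl⟩ := hs
    have hc : (n : K) * c = 0 := by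
      rw [trace_smul, trace_one, Fintype.card_fin, smul_eq_mul] at hA
      rw [mul_comm, hA]
    refine ⟨_, _, ?_, ?_, RegularCommutator.shift_commutator hc, fun _ => ?_,
      fun h => absurd ⟨c, rfl⟩ h⟩
    · simp [RegularCommutator.trace_bidiag]
    · simp [trace]
    · rw [RegularCommutator.glCent_eq_cent,
        (RegularCommutator.isCyclicRow_bidiag _).finrank_cent, Fintype.card_fin]
  · obtain ⟨X, ⟨hX, Y, hY⟩, hXt, Z, hZ, hZt⟩ := RegularCommutator.good_of_not_isScalar hn hs hA
    rw [Fintype.card_fin] at hX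
    refine ⟨X, Y - (Y.trace / Z.trace) • Z, hXt, ?_, ?_, fun h => absurd h hs,
      fun _ => RegularCommutator.finrank_slCent hX hZ hZt⟩
    · simp [trace_sub, hZt]
    · have := RegularCommutator.mem_cent.1 hZ
      rw [Matrix.mul_sub, Matrix.sub_mul, Matrix.mul_smul, Matrix.smul_mul, this, ← hY]
      abel
end

section
/- Let R be a commutative principal ideal domain, n ≥ 3, and suppose A = (a_{ij}) ∈ sl_n(R) is a trace-zero matrix in Laffey–Reams form, i.e. a_{ij} = 0 for all j ≥ i+2 and A ≡ a_{11}·1_n modulo the ideal (a_{12}). Then there exists x = (x_1, …, x_{n−1})ᵀ ∈ R^{n−1} with x_{n−1} = a_{11} such that tr(X(x, a_{12})^r · A) = 0 for each r = 1, …, n−1. -/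
open Matrix

/-- The matrix `X(x,a)` (`0`-based indices): entry `(i, i+1)` equals `1` for `1 ≤ i ≤ n-2`,
entry `(i, 0)` equals `x_{i-1}` for `1 ≤ i`, entry `(n-1, 1)` equals `a`, all other entries
zero. -/
def Xmat (n : ℕ) {S : Type*} [CommRing S] (x : Fin (n - 1) → S) (a : S) :
    Matrix (Fin n) (Fin n) S :=
  fun i j =>
    if 1 ≤ (i : ℕ) ∧ (i : ℕ) ≤ n - 2 ∧ (j : ℕ) = (i : ℕ) + 1 then 1
    else if h : (j : ℕ) = 0 ∧ 1 ≤ (i : ℕ) then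
      x ⟨(i : ℕ) - 1, by have := i.isLt; omega⟩
    else if (i : ℕ) = n - 1 ∧ (j : ℕ) = 1 then a
    else 0

/-- The `m × m` matrix with ones on the superdiagonal, `a` in the lower left corner, and zeros
elsewhere. -/
def twistedShift (m : ℕ) {S : Type*} [CommRing S] (a : S) : Matrix (Fin m) (Fin m) S :=
  fun i j => if (j : ℕ) = i + 1 then 1 else if (j : ℕ) + m = i + 1 then a else 0

theorem twistedShift_pow_apply {S : Type*} [CommRing S] {m : ℕ} (a : S) {r : ℕ} (hr : r ≤ m)
    (i j : Fin m) : (twistedShift m a ^ r) i j =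
      if (j : ℕ) = i + r then 1 else if (j : ℕ) + m = i + r then a else 0 := by
  induction r generalizing i j with
  | zero =>
    have hi := i.isLt
    rw [pow_zero, Matrix.one_apply, if_neg (c := (j : ℕ) + m = i + 0) (by omega)]
    simp [Fin.ext_iff, eq_comm]
  | succ r ih =>
    rw [pow_succ', Matrix.mul_apply]
    have hi := i.isLt
    have hj := j.isLt
    by_cases h : (i : ℕ) + 1 < m
    · rw [Finset.sum_eq_single ⟨i + 1, h⟩ _ (by simp), ih (by omega)]
      · simp [twistedShift, add_assoc, add_comm 1 r]
      · intro k _ hk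
        have hk' : (k : ℕ) ≠ i + 1 := fun e => hk (Fin.ext e)
        rw [twistedShift, if_neg hk', if_neg (by omega), zero_mul]
    · rw [Finset.sum_eq_single ⟨0, by omega⟩ _ (by simp), ih (by omega)]
      · simp only [twistedShift]
        rw [if_neg (by omega), if_pos (by omega), if_neg (c := (j : ℕ) + m = 0 + r) (by omega),
          if_neg (c := (j : ℕ) = i + (r + 1)) (by omega)]
        by_cases hjr : (j : ℕ) = r
        · rw [if_pos (by omega), if_pos (by omega), mul_one]
        · rw [if_neg (by omega), if_neg (by omega), mul_zero]
      · intro k _ hk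
        have hk' : (k : ℕ) ≠ 0 := fun e => hk (Fin.ext e)
        have := k.isLt
        rw [twistedShift, if_neg (by omega), if_neg (by omega), zero_mul]

theorem trace_twistedShift_pow {S : Type*} [CommRing S] {m : ℕ} (a : S) {r : ℕ} (h0 : 0 < r)
    (hr : r < m) : (twistedShift m a ^ r).trace = 0 :=
  Finset.sum_eq_zero fun i _ => by
    rw [Matrix.diag_apply, twistedShift_pow_apply a hr.le, if_neg (by omega), if_neg (by omega)]

theorem twistedShift_pow_self {S : Type*} [CommRing S] {m : ℕ} (a : S) :
    twistedShift m a ^ m = a • (1 : Matrix (Fin m) (Fin m) S) := by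
  ext i j
  rw [twistedShift_pow_apply a le_rfl, if_neg (by omega)]
  simp [Matrix.one_apply, Fin.ext_iff, eq_comm]

theorem twistedShift_pow_mulVec_zero {S : Type*} [CommRing S] {m : ℕ} (a : S) (x : Fin m → S)
    {r : ℕ} (hr : r < m) : (twistedShift m a ^ r *ᵥ x) ⟨0, by omega⟩ = x ⟨r, hr⟩ := by
  rw [Matrix.mulVec, dotProduct, Finset.sum_eq_single ⟨r, hr⟩ _ (by simp)]
  · rw [twistedShift_pow_apply a hr.le, if_pos (by simp), one_mul]
  · intro k _ hk
    have hk' : (k : ℕ) ≠ r := fun e => hk (Fin.ext e)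
    rw [twistedShift_pow_apply a hr.le, if_neg (by simpa using hk'), if_neg (by dsimp; omega),
      zero_mul]

section Xmat

variable {S : Type*} [CommRing S] {m : ℕ} (x : Fin m → S) (a : S)

theorem Xmat_zero_apply (hm : 0 < m) (j : Fin (m + 1)) : Xmat (m + 1) x a 0 j = 0 := by
  simp [Xmat, hm.ne]

theorem Xmat_succ_zero (i : Fin m) : Xmat (m + 1) x a i.succ 0 = x i := by
  simp [Xmat]

theorem Xmat_succ_succ (i j : Fin m) :
    Xmat (m + 1) x a i.succ j.succ = twistedShift m a i j := by
  have hi := i.isLt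
  have hj := j.isLt
  simp only [Xmat, twistedShift, Fin.val_succ]
  by_cases h1 : (j : ℕ) = i + 1
  · rw [if_pos (by omega), if_pos h1]
  · rw [if_neg (by omega), if_neg h1, dif_neg (by omega)]
    by_cases h2 : (j : ℕ) + m = i + 1
    · rw [if_pos (by omega), if_pos h2]
    · rw [if_neg (by omega), if_neg h2]

theorem Xmat_pow_succ_zero_apply (hm : 0 < m) (r : ℕ) (j : Fin (m + 1)) :
    (Xmat (m + 1) x a ^ (r + 1)) 0 j = 0 := by
  rw [pow_succ', Matrix.mul_apply]
  exact Finset.sum_eq_zero fun k _ => by rw [Xmat_zero_apply x a hm, zero_mul]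

theorem Xmat_pow_succ_succ_succ (hm : 0 < m) (r : ℕ) (i j : Fin m) :
    (Xmat (m + 1) x a ^ (r + 1)) i.succ j.succ = (twistedShift m a ^ (r + 1)) i j := by
  induction r generalizing i with
  | zero => simpa using Xmat_succ_succ x a i j
  | succ r ih =>
    rw [pow_succ', Matrix.mul_apply, Fin.sum_univ_succ, Xmat_pow_succ_zero_apply x a hm,
      mul_zero, zero_add, pow_succ' _ (r + 1), Matrix.mul_apply]
    exact Finset.sum_congr rfl fun k _ => by rw [ih, Xmat_succ_succ]

theorem Xmat_pow_succ_succ_zero (hm : 0 < m) (r : ℕ) (i : Fin m) :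
    (Xmat (m + 1) x a ^ (r + 1)) i.succ 0 = (twistedShift m a ^ r *ᵥ x) i := by
  induction r generalizing i with
  | zero => simpa using Xmat_succ_zero x a i
  | succ r ih =>
    rw [pow_succ', Matrix.mul_apply, Fin.sum_univ_succ, Xmat_pow_succ_zero_apply x a hm,
      mul_zero, zero_add, pow_succ' (twistedShift m a) r, ← Matrix.mulVec_mulVec, Matrix.mulVec,
      dotProduct]
    exact Finset.sum_congr rfl fun k _ => by rw [ih, Xmat_succ_succ]

theorem trace_Xmat_pow_succ_mul (A : Matrix (Fin (m + 1)) (Fin (m + 1)) S) {r : ℕ} (hr : r < m)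
    (hA : ∀ i : Fin m, 0 < (i : ℕ) → A 0 i.succ = 0) :
    (Xmat (m + 1) x a ^ (r + 1) * A).trace =
      A 0 (Fin.succ ⟨0, by omega⟩) * x ⟨r, hr⟩ +
        (twistedShift m a ^ (r + 1) * A.submatrix Fin.succ Fin.succ).trace := by
  have hm : 0 < m := by omega
  rw [Matrix.trace, Fin.sum_univ_succ, Matrix.diag_apply, Matrix.mul_apply,
    Finset.sum_eq_zero fun k _ => by rw [Xmat_pow_succ_zero_apply x a hm, zero_mul], zero_add]
  simp only [Matrix.diag_apply, Matrix.mul_apply, Fin.sum_univ_succ (n := m), Matrix.trace,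
    Xmat_pow_succ_succ_succ x a hm, Xmat_pow_succ_succ_zero x a hm, Finset.sum_add_distrib,
    Matrix.submatrix_apply]
  congr 1
  rw [Finset.sum_eq_single ⟨0, hm⟩ _ (by simp), twistedShift_pow_mulVec_zero a x hr, mul_comm]
  intro k _ hk
  rw [hA k (Nat.pos_of_ne_zero fun e => hk (Fin.ext e)), mul_zero]

end Xmat

theorem dvd_trace_mul_of_dvd_sub_smul_one {S ι : Type*} [CommRing S] [Fintype ι] [DecidableEq ι]
    {a c : S} {C B : Matrix ι ι S} (hC : C.trace = 0)
    (hB : ∀ i j, a ∣ (B - c • (1 : Matrix ι ι S)) i j) : a ∣ (C * B).trace := by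
  have h : (C * B).trace = (C * (B - c • (1 : Matrix ι ι S))).trace := by
    simp [mul_sub, Matrix.trace_sub, hC]
  rw [h]
  exact Finset.dvd_sum fun i _ => Finset.dvd_sum fun j _ => (hB j i).mul_left _

/-- For a trace-zero matrix `A` in Laffey–Reams form, there is a vector `x` with
`x_{n-1} = a_{11}` such that `tr(X(x, a_{12})^r · A) = 0` for `r = 1, …, n-1`. -/
theorem exists_x_trace_Xmat_pow_mul_eq_zero {R : Type*} [CommRing R] [IsDomain R]
    [IsPrincipalIdealRing R] {n : ℕ} (hn : 3 ≤ n)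
    (A : Matrix (Fin n) (Fin n) R) (hA : A.trace = 0)
    (hLR1 : ∀ i j : Fin n, (i : ℕ) + 2 ≤ (j : ℕ) → A i j = 0)
    (hLR2 : ∀ i j : Fin n,
      (A - A ⟨0, by omega⟩ ⟨0, by omega⟩ • (1 : Matrix (Fin n) (Fin n) R)) i j ∈
        Ideal.span {A ⟨0, by omega⟩ ⟨1, by omega⟩}) :
    ∃ x : Fin (n - 1) → R,
      x ⟨n - 2, by omega⟩ = A ⟨0, by omega⟩ ⟨0, by omega⟩ ∧
      ∀ r : ℕ, 1 ≤ r → r ≤ n - 1 →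
        ((Xmat n x (A ⟨0, by omega⟩ ⟨1, by omega⟩)) ^ r * A).trace = 0 := by
  obtain ⟨k, rfl⟩ : ∃ k, n = k + 1 + 1 := ⟨n - 2, by omega⟩
  set a := A ⟨0, by omega⟩ ⟨1, by omega⟩
  set c := A ⟨0, by omega⟩ ⟨0, by omega⟩
  let B := A.submatrix Fin.succ Fin.succ
  have hB : ∀ i j, a ∣ (B - c • (1 : Matrix (Fin (k + 1)) (Fin (k + 1)) R)) i j := fun i j => by
    simpa [B, Matrix.one_apply] using Ideal.mem_span_singleton.mp (hLR2 i.succ j.succ)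
  have htrB : B.trace = -c := by
    rw [Matrix.trace, Fin.sum_univ_succ] at hA
    exact eq_neg_of_add_eq_zero_right hA
  have hx : ∀ r : Fin (k + 1), ∃ y, a * y + (twistedShift (k + 1) a ^ (r + 1 : ℕ) * B).trace = 0 ∧
      ((r : ℕ) = k → y = c) := fun r => by
    by_cases hr : (r : ℕ) = k
    · refine ⟨c, ?_, fun _ => rfl⟩
      rw [hr, twistedShift_pow_self]
      simp [htrB]
    · obtain ⟨y, hy⟩ := dvd_trace_mul_of_dvd_sub_smul_one
        (trace_twistedShift_pow a (Nat.succ_pos r) (by omega : (r : ℕ) + 1 < k + 1)) hB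
      exact ⟨-y, by rw [hy]; ring, fun h => absurd h hr⟩
  choose x hx hxk using hx
  refine ⟨x, hxk _ rfl, fun r h1 hr => ?_⟩
  obtain ⟨s, rfl⟩ : ∃ s, r = s + 1 := ⟨r - 1, by omega⟩
  have hs : s < k + 1 := by omega
  exact (trace_Xmat_pow_succ_mul x a A hs fun i hi => hLR1 _ _ (by simp; omega)).trans (hx ⟨s, hs⟩)
end
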